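/- With λ(t):=λ₁(Γ_t) and μ(L) the Sturm–Liouville ground energy with potential λ on (L,∞) (Neumann at L), there exists a unique L* ∈ (−1,∞) such that μ(L*) = inf_{L>−1} μ(L); moreover L* belongs to (−1,0) and satisfies μ(L*) = λ(L*). -/

import Mathlib

/-!
Write `λ(t) = λ₁(Γ_t)`. On `(-1, 0]` separation of variables gives `λ(t) = π² / (2 (1 + t)²)`. For
`R ≥ 0` a corner-concentrated test function gives `λ(R) ≤ π²`, the transverse ground energy of the
arms, so that lengthening the arms cannot lower the Rayleigh quotient and `λ` is nondecreasing on
`[0, ∞)`; moreover `λ(0) < λ(1)`. Thus `λ` is a potential well with bottom at `0`, and the rest of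
the argument is one-dimensional.

Two comparisons drive it. Restricting test functions to `(s, ∞)` shows that cutting off `(L, s]`
cannot raise `μ` above a level which `λ` exceeds on `(L, s]`. Extending test functions on `(s, ∞)`
to `(L, ∞)` by the constant `q(s)` shows that `m ≤ μ(L)` implies
`∫_s^∞ q'² + (λ - m) q² ≥ -(∫_L^s (λ - m)) q(s)²`. The first point `a` where `λ(a) ≤ μ(a)` lies in
`(-1, 0)` and satisfies `λ(a) = μ(a)`. With `m = λ(a)`, either comparison bounds the form of
`-d²/dt² + λ - m` on `(L, ∞)`, for `L ≠ a`, below by a positive multiple of `q(L)²`. This improves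
to a bound by a multiple of `∫ q²` by Grönwall's inequality, as `λ - m` is bounded away from `0`
far out, and so `μ(L) > m`.
-/

noncomputable section
open MeasureTheory Set Real

/-- The interval `I = (-1,0)`. -/
def II : Set ℝ := Set.Ioo (-1) 0

/-- The broken guide `Γ = {x ∈ ℝ² : -1 < min(x₁,x₂) < 0}`. -/
def Gam : Set (ℝ × ℝ) := {p | -1 < min p.1 p.2 ∧ min p.1 p.2 < 0}

/-- The box `□_L = {x : max(|x₁+1|,|x₂+1|) < L}`. -/
def Box (L : ℝ) : Set (ℝ × ℝ) := {p | |p.1 + 1| < L ∧ |p.2 + 1| < L}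

/-- The finite guide `Γ_R = Γ ∩ □_{R+1}`. -/
def GamR (R : ℝ) : Set (ℝ × ℝ) := Gam ∩ Box (R + 1)

/-- The Neumann part `Σ_R = ∂Γ_R ∩ ∂□_{R+1}` of the boundary. -/
def Sig (R : ℝ) : Set (ℝ × ℝ) := frontier (GamR R) ∩ frontier (Box (R + 1))

/-- The Dirichlet part `∂Γ_R ∖ Σ_R` of the boundary. -/
def DirB (R : ℝ) : Set (ℝ × ℝ) := frontier (GamR R) \ Sig R

/-- Squared gradient `|∇u|² = (∂₁u)² + (∂₂u)²`. -/
def gradSq2 (u : ℝ × ℝ → ℝ) (p : ℝ × ℝ) : ℝ :=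
  (fderiv ℝ u p (1, 0)) ^ 2 + (fderiv ℝ u p (0, 1)) ^ 2

/-- Admissible functions for the mixed problem on `Γ_R`: `C¹` up to the boundary
(modelled by a globally `C¹` extension) vanishing on the Dirichlet part. -/
def AdmR (R : ℝ) (u : ℝ × ℝ → ℝ) : Prop :=
  ContDiff ℝ 1 u ∧ ∀ p ∈ DirB R, u p = 0

/-- First Rayleigh quotient `λ₁(Γ_R)` of the mixed Dirichlet–Neumann Laplacian on `Γ_R`. -/
def lamR (R : ℝ) : ℝ :=
  sInf {r | ∃ u : ℝ × ℝ → ℝ, AdmR R u ∧ (∫ p in GamR R, (u p) ^ 2) ≠ 0 ∧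
    r = (∫ p in GamR R, gradSq2 u p) / ∫ p in GamR R, (u p) ^ 2}

/-- First Rayleigh quotient `λ₁(Γ)` of the Dirichlet Laplacian on the broken guide `Γ`. -/
def lamG : ℝ :=
  sInf {r | ∃ u : ℝ × ℝ → ℝ, ContDiff ℝ 1 u ∧ HasCompactSupport u ∧ tsupport u ⊆ Gam ∧
    (∫ p in Gam, (u p) ^ 2) ≠ 0 ∧
    r = (∫ p in Gam, gradSq2 u p) / ∫ p in Gam, (u p) ^ 2}

/-- `ω = √(π² − λ₁(Γ))`. -/
def omega : ℝ := Real.sqrt (π ^ 2 - lamG)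

/-- Ground energy `μ(L)` of the Sturm–Liouville operator `q ↦ -q'' + λ q` on `(L,∞)`
with Neumann condition at `L` and potential `λ(t) = λ₁(Γ_t)`, defined as the infimum of
Rayleigh quotients over (`C¹` representatives of) `H¹(L,∞)`. -/
def muSL (L : ℝ) : ℝ :=
  sInf {r | ∃ q : ℝ → ℝ, ContDiff ℝ 1 q ∧
    IntegrableOn (fun t => (q t) ^ 2) (Set.Ioi L) ∧
    IntegrableOn (fun t => (deriv q t) ^ 2) (Set.Ioi L) ∧
    (∫ t in Set.Ioi L, (q t) ^ 2) ≠ 0 ∧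
    r = (∫ t in Set.Ioi L, ((deriv q t) ^ 2 + lamR t * (q t) ^ 2)) /
      ∫ t in Set.Ioi L, (q t) ^ 2}

/-! ### Inequalities for continuously differentiable functions on an interval -/

theorem sq_intervalIntegral_le_mul_integral_sq {f : ℝ → ℝ} (hf : Continuous f) {a b : ℝ}
    (hab : a ≤ b) : (∫ t in a..b, f t) ^ 2 ≤ (b - a) * ∫ t in a..b, f t ^ 2 := by
  rcases hab.eq_or_lt with rfl | hab'
  · simp
  set I := ∫ t in a..b, f t with hI
  have hvar : ∫ t in a..b, ((b - a) * f t - I) ^ 2 =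
      (b - a) * ((b - a) * (∫ t in a..b, f t ^ 2) - I ^ 2) := by
    have hexp : ∀ t, ((b - a) * f t - I) ^ 2 =
        (b - a) ^ 2 * f t ^ 2 - 2 * (b - a) * I * f t + I ^ 2 := fun t => by ring
    simp only [hexp]
    rw [intervalIntegral.integral_add, intervalIntegral.integral_sub,
      intervalIntegral.integral_const_mul, intervalIntegral.integral_const_mul,
      intervalIntegral.integral_const, smul_eq_mul, ← hI]
    · ring
    all_goals exact Continuous.intervalIntegrable (by fun_prop) _ _
  have hnonneg : 0 ≤ ∫ t in a..b, ((b - a) * f t - I) ^ 2 :=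
    intervalIntegral.integral_nonneg hab fun t _ => sq_nonneg _
  rw [hvar] at hnonneg
  exact sub_nonneg.1 (nonneg_of_mul_nonneg_right hnonneg (sub_pos.2 hab'))

theorem integral_sq_nonneg (f : ℝ → ℝ) {a b : ℝ} (hab : a ≤ b) : 0 ≤ ∫ t in a..b, f t ^ 2 :=
  intervalIntegral.integral_nonneg hab fun _ _ => sq_nonneg _

theorem integral_sq_le_integral_sq {f : ℝ → ℝ} (hf : Continuous f) {a b c d : ℝ} (hac : a ≤ c)
    (hcd : c ≤ d) (hdb : d ≤ b) : ∫ t in c..d, f t ^ 2 ≤ ∫ t in a..b, f t ^ 2 :=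
  intervalIntegral.integral_mono_interval hac hcd hdb (.of_forall fun _ => sq_nonneg _)
    ((hf.pow 2).intervalIntegrable _ _)

theorem sq_sub_le_mul_integral_deriv_sq {q : ℝ → ℝ} (hq : ContDiff ℝ 1 q) {s t : ℝ}
    (hst : s ≤ t) : (q t - q s) ^ 2 ≤ (t - s) * ∫ x in s..t, deriv q x ^ 2 := by
  rw [← intervalIntegral.integral_deriv_eq_sub (fun x _ => hq.differentiable one_ne_zero x)
    (hq.continuous_deriv_one.intervalIntegrable _ _)]
  exact sq_intervalIntegral_le_mul_integral_sq hq.continuous_deriv_one hst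

theorem sq_le_sq_add_integral_deriv_sq {q : ℝ → ℝ} (hq : ContDiff ℝ 1 q) {a b s t : ℝ}
    (hs : s ∈ Icc a b) (ht : t ∈ Icc a b) :
    q t ^ 2 ≤ 2 * q s ^ 2 + 2 * (b - a) * ∫ x in a..b, deriv q x ^ 2 := by
  have hbound : ∀ {s t}, s ∈ Icc a b → t ∈ Icc a b → s ≤ t →
      (q t - q s) ^ 2 ≤ (b - a) * ∫ x in a..b, deriv q x ^ 2 := fun hs ht hst =>
    (sq_sub_le_mul_integral_deriv_sq hq hst).trans <| mul_le_mul (by linarith [hs.1, ht.2])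
      (integral_sq_le_integral_sq hq.continuous_deriv_one hs.1 hst ht.2)
      (integral_sq_nonneg _ hst) (by linarith [hs.1, hs.2])
  have hsub : (q t - q s) ^ 2 ≤ (b - a) * ∫ x in a..b, deriv q x ^ 2 := by
    rcases le_total s t with h | h
    · exact hbound hs ht h
    · rw [← neg_sub, neg_sq]
      exact hbound ht hs h
  linarith [sq_nonneg (q t - 2 * q s), hsub]

theorem mul_sq_le_integral_sq_add_integral_deriv_sq {q : ℝ → ℝ} (hq : ContDiff ℝ 1 q)
    {a b c d t : ℝ} (hac : a ≤ c) (hcd : c ≤ d) (hdb : d ≤ b) (ht : t ∈ Icc a b) :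
    (d - c) * q t ^ 2 ≤ 2 * (∫ x in c..d, q x ^ 2)
      + 2 * (d - c) * (b - a) * ∫ x in a..b, deriv q x ^ 2 := by
  have hc : Continuous q := hq.continuous
  set J := ∫ x in a..b, deriv q x ^ 2
  have hmono : ∫ _ in c..d, q t ^ 2 ≤ ∫ x in c..d, (2 * q x ^ 2 + 2 * (b - a) * J) :=
    intervalIntegral.integral_mono_on hcd (by simp)
      (Continuous.intervalIntegrable (by fun_prop) _ _) fun x hx =>
        sq_le_sq_add_integral_deriv_sq hq ⟨hac.trans hx.1, hx.2.trans hdb⟩ ht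
  rw [intervalIntegral.integral_const, smul_eq_mul, intervalIntegral.integral_add,
    intervalIntegral.integral_const_mul, intervalIntegral.integral_const, smul_eq_mul] at hmono
  · linarith
  all_goals exact Continuous.intervalIntegrable (by fun_prop) _ _

theorem integral_sq_le_sq_add_integral_deriv_sq {q : ℝ → ℝ} (hq : ContDiff ℝ 1 q) {a b s : ℝ}
    (hs : s ∈ Icc a b) :
    ∫ x in a..b, q x ^ 2 ≤
      (b - a) * (2 * q s ^ 2 + 2 * (b - a) * ∫ x in a..b, deriv q x ^ 2) := by
  have hmono : ∫ x in a..b, q x ^ 2 ≤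
      ∫ _ in a..b, (2 * q s ^ 2 + 2 * (b - a) * ∫ x in a..b, deriv q x ^ 2) :=
    intervalIntegral.integral_mono_on (hs.1.trans hs.2)
      ((hq.continuous.pow 2).intervalIntegrable _ _) (by simp)
      fun x hx => sq_le_sq_add_integral_deriv_sq hq hs hx
  rwa [intervalIntegral.integral_const, smul_eq_mul] at hmono

theorem integral_le_gronwallBound {f : ℝ → ℝ} (hf : Continuous f) (hf0 : ∀ t, 0 ≤ f t)
    {a b A B : ℝ} (hab : a ≤ b) (h : ∀ s ∈ Ico a b, f s ≤ A + B * ∫ t in a..s, f t) :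
    ∫ t in a..b, f t ≤ gronwallBound 0 B A (b - a) := by
  have hderiv : ∀ s, HasDerivAt (fun s => ∫ t in a..s, f t) (f s) s := fun s =>
    intervalIntegral.integral_hasDerivAt_right (hf.intervalIntegrable _ _)
      (hf.stronglyMeasurableAtFilter _ _) hf.continuousAt
  have hnonneg : ∀ {s}, a ≤ s → 0 ≤ ∫ t in a..s, f t := fun hs =>
    intervalIntegral.integral_nonneg hs fun t _ => hf0 t
  have hgronwall := norm_le_gronwallBound_of_norm_deriv_right_le
    (f := fun s => ∫ t in a..s, f t) (f' := f) (δ := 0) (K := B) (ε := A) (a := a) (b := b)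
    (fun s _ => (hderiv s).continuousAt.continuousWithinAt)
    (fun s _ => (hderiv s).hasDerivWithinAt) (by simp)
    (fun s hs => by
      rw [Real.norm_of_nonneg (hf0 s), Real.norm_of_nonneg (hnonneg hs.1), add_comm]
      exact h s hs) b ⟨hab, le_rfl⟩
  rwa [Real.norm_of_nonneg (hnonneg hab)] at hgronwall

/-! ### The energy form and its ground energy -/

/-- Membership of `q` in the form domain `H¹(L,∞)`. As in `muSL`, the form domain is represented
by its globally `C¹` elements. -/
structure MemH1 (L : ℝ) (q : ℝ → ℝ) : Prop where
  contDiff : ContDiff ℝ 1 q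
  integrableOn_sq : IntegrableOn (fun t => q t ^ 2) (Ioi L)
  integrableOn_deriv_sq : IntegrableOn (fun t => deriv q t ^ 2) (Ioi L)

/-- The quadratic form of the Sturm–Liouville operator `-d²/dt² + W` on `(L,∞)` with Neumann
condition at `L`. The form of `-d²/dt² + W - m` is `energy (fun t => W t - m)`. -/
def energy (W : ℝ → ℝ) (L : ℝ) (q : ℝ → ℝ) : ℝ :=
  ∫ t in Ioi L, (deriv q t ^ 2 + W t * q t ^ 2)

/-- The infimum of the Rayleigh quotients of `energy V L`, that is, the ground energy of
`-d²/dt² + V` on `(L,∞)` with Neumann condition at `L`. -/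
def groundEnergy (V : ℝ → ℝ) (L : ℝ) : ℝ :=
  sInf {r | ∃ q, MemH1 L q ∧ ∫ t in Ioi L, q t ^ 2 ≠ 0 ∧
    r = energy V L q / ∫ t in Ioi L, q t ^ 2}

theorem muSL_eq_groundEnergy : muSL = groundEnergy lamR := by
  funext L
  refine congrArg sInf (Set.ext fun r => ⟨?_, ?_⟩)
  · rintro ⟨q, hq, hq2, hdq2, hne, hr⟩
    exact ⟨q, ⟨hq, hq2, hdq2⟩, hne, hr⟩
  · rintro ⟨q, ⟨hq, hq2, hdq2⟩, hne, hr⟩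
    exact ⟨q, hq, hq2, hdq2, hne, hr⟩

namespace MemH1

variable {L s : ℝ} {q : ℝ → ℝ}

theorem mono (hq : MemH1 L q) (hs : L ≤ s) : MemH1 s q :=
  ⟨hq.contDiff, hq.integrableOn_sq.mono_set (Ioi_subset_Ioi hs),
    hq.integrableOn_deriv_sq.mono_set (Ioi_subset_Ioi hs)⟩

theorem continuous (hq : MemH1 L q) : Continuous q := hq.contDiff.continuous

theorem continuous_deriv (hq : MemH1 L q) : Continuous (deriv q) :=
  hq.contDiff.continuous_deriv_one

theorem integral_sq_eq_add (hq : MemH1 L q) (hs : L ≤ s) :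
    ∫ t in Ioi L, q t ^ 2 = (∫ t in L..s, q t ^ 2) + ∫ t in Ioi s, q t ^ 2 :=
  (intervalIntegral.integral_interval_add_Ioi hq.integrableOn_sq
    (hq.mono hs).integrableOn_sq).symm

theorem intervalIntegral_deriv_sq_le (hq : MemH1 L q) (hs : L ≤ s) :
    ∫ t in L..s, deriv q t ^ 2 ≤ ∫ t in Ioi L, deriv q t ^ 2 := by
  rw [intervalIntegral.integral_of_le hs]
  exact setIntegral_mono_set hq.integrableOn_deriv_sq (.of_forall fun _ => sq_nonneg _)
    Ioc_subset_Ioi_self.eventuallyLE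

theorem intervalIntegral_sq_le (hq : MemH1 L q) (hs : L ≤ s) :
    ∫ t in L..s, q t ^ 2 ≤ ∫ t in Ioi L, q t ^ 2 := by
  rw [intervalIntegral.integral_of_le hs]
  exact setIntegral_mono_set hq.integrableOn_sq (.of_forall fun _ => sq_nonneg _)
    Ioc_subset_Ioi_self.eventuallyLE

theorem of_eqOn_Ici {p : ℝ → ℝ} (hq : MemH1 s q) (hp : ContDiff ℝ 1 p) (hLs : L ≤ s)
    (hpq : EqOn p q (Ici s)) (hdpq : EqOn (deriv p) (deriv q) (Ici s)) : MemH1 L p := by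
  have hsplit : Ioi L = Ioc L s ∪ Ioi s := (Ioc_union_Ioi_eq_Ioi hLs).symm
  refine ⟨hp, ?_, ?_⟩ <;> rw [hsplit]
  · exact (hp.continuous.pow 2).integrableOn_Ioc.union <| hq.integrableOn_sq.congr_fun
      (fun t ht => congrArg (· ^ 2) (hpq (mem_Ici_of_Ioi ht)).symm) measurableSet_Ioi
  · exact (hp.continuous_deriv_one.pow 2).integrableOn_Ioc.union <|
      hq.integrableOn_deriv_sq.congr_fun
        (fun t ht => congrArg (· ^ 2) (hdpq (mem_Ici_of_Ioi ht)).symm) measurableSet_Ioi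

end MemH1

theorem exp_neg_mul_sq (k t : ℝ) : rexp (-k * t) ^ 2 = rexp (-(2 * k) * t) := by
  rw [← Real.exp_nat_mul]
  congr 1
  push_cast
  ring

theorem deriv_exp_neg_mul (k t : ℝ) :
    deriv (fun t : ℝ => rexp (-k * t)) t = -k * rexp (-k * t) := by
  simpa [mul_comm] using (((hasDerivAt_id t).const_mul (-k)).exp).deriv

theorem integral_exp_neg_mul_sq {k : ℝ} (hk : 0 < k) (L : ℝ) :
    ∫ t in Ioi L, rexp (-k * t) ^ 2 = rexp (-k * L) ^ 2 / (2 * k) := by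
  simp only [exp_neg_mul_sq]
  rw [integral_exp_mul_Ioi (by linarith), neg_div_neg_eq]

theorem memH1_exp_neg_mul {k : ℝ} (hk : 0 < k) (L : ℝ) : MemH1 L fun t => rexp (-k * t) := by
  have hint : IntegrableOn (fun t => rexp (-k * t) ^ 2) (Ioi L) := by
    simp only [exp_neg_mul_sq]
    exact exp_neg_integrableOn_Ioi L (by linarith)
  refine ⟨by fun_prop, hint, ?_⟩
  simp only [deriv_exp_neg_mul, mul_pow]
  exact hint.const_mul _

section Energy

variable {W V q : ℝ → ℝ} {L s m : ℝ}

theorem memLp_top_sub_const (hV : MemLp V ⊤ (volume.restrict (Ioi L))) (m : ℝ) :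
    MemLp (fun t => V t - m) ⊤ (volume.restrict (Ioi L)) :=
  hV.sub (memLp_top_const m)

theorem memLp_top_mono (hW : MemLp W ⊤ (volume.restrict (Ioi L))) (hs : L ≤ s) :
    MemLp W ⊤ (volume.restrict (Ioi s)) :=
  hW.mono_measure (Measure.restrict_mono (Ioi_subset_Ioi hs) le_rfl)

theorem exists_ae_abs_le (hW : MemLp W ⊤ (volume.restrict (Ioi L))) :
    ∃ M, 0 < M ∧ ∀ᵐ t ∂volume.restrict (Ioi L), |W t| ≤ M := by
  refine ⟨(eLpNormEssSup W (volume.restrict (Ioi L))).toReal + 1, by positivity, ?_⟩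
  have hfin : eLpNormEssSup W (volume.restrict (Ioi L)) ≠ ⊤ := by
    simpa using hW.eLpNorm_lt_top.ne
  filter_upwards [ae_le_eLpNormEssSup (f := W) (μ := volume.restrict (Ioi L))] with t ht
  have := ENNReal.toReal_mono hfin ht
  rw [toReal_enorm, Real.norm_eq_abs] at this
  linarith

theorem integrableOn_mul_of_memLp_top (hW : MemLp W ⊤ (volume.restrict (Ioi L))) {f : ℝ → ℝ}
    {S : Set ℝ} (hS : S ⊆ Ioi L) (hf : IntegrableOn f S) :
    IntegrableOn (fun t => W t * f t) S := by
  obtain ⟨M, -, hM⟩ := exists_ae_abs_le hW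
  have hle : volume.restrict S ≤ volume.restrict (Ioi L) := Measure.restrict_mono hS le_rfl
  exact Integrable.bdd_mul hf (hW.aestronglyMeasurable.mono_measure hle) (ae_mono hle hM)

theorem intervalIntegrable_mul_of_memLp_top (hW : MemLp W ⊤ (volume.restrict (Ioi L)))
    (hs : L ≤ s) {f : ℝ → ℝ} (hf : Continuous f) :
    IntervalIntegrable (fun t => W t * f t) volume L s :=
  (intervalIntegrable_iff_integrableOn_Ioc_of_le hs).2 <|
    integrableOn_mul_of_memLp_top hW Ioc_subset_Ioi_self hf.integrableOn_Ioc

theorem intervalIntegrable_of_memLp_top (hW : MemLp W ⊤ (volume.restrict (Ioi L)))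
    (hs : L ≤ s) : IntervalIntegrable W volume L s := by
  simpa using intervalIntegrable_mul_of_memLp_top hW hs (continuous_const (y := (1 : ℝ)))

theorem integrableOn_energy (hW : MemLp W ⊤ (volume.restrict (Ioi L))) (hq : MemH1 L q) :
    IntegrableOn (fun t => deriv q t ^ 2 + W t * q t ^ 2) (Ioi L) :=
  hq.integrableOn_deriv_sq.add (integrableOn_mul_of_memLp_top hW subset_rfl hq.integrableOn_sq)

theorem energy_sub_const (hV : MemLp V ⊤ (volume.restrict (Ioi L))) (hq : MemH1 L q) (m : ℝ) :
    energy (fun t => V t - m) L q = energy V L q - m * ∫ t in Ioi L, q t ^ 2 := by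
  rw [energy, energy, ← integral_const_mul,
    ← integral_sub (integrableOn_energy hV hq) (hq.integrableOn_sq.const_mul m)]
  exact integral_congr_ae (.of_forall fun t => by ring)

theorem energy_eq_add (hW : MemLp W ⊤ (volume.restrict (Ioi L))) (hs : L ≤ s)
    (hq : MemH1 L q) :
    energy W L q = (∫ t in L..s, deriv q t ^ 2) + (∫ t in L..s, W t * q t ^ 2)
      + energy W s q := by
  rw [energy, energy, ← intervalIntegral.integral_interval_add_Ioi (integrableOn_energy hW hq)
    (integrableOn_energy (memLp_top_mono hW hs) (hq.mono hs)), intervalIntegral.integral_add]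
  · exact (hq.continuous_deriv.pow 2).intervalIntegrable _ _
  · exact intervalIntegrable_mul_of_memLp_top hW hs (hq.continuous.pow 2)

theorem energy_congr {p : ℝ → ℝ} (hpq : EqOn p q (Ici L))
    (hdpq : EqOn (deriv p) (deriv q) (Ici L)) :
    energy W L p = energy W L q :=
  setIntegral_congr_fun measurableSet_Ioi fun t ht => by
    simp only [hpq (mem_Ici_of_Ioi ht), hdpq (mem_Ici_of_Ioi ht)]

theorem mul_integral_sq_le_integral_mul_sq (hW : MemLp W ⊤ (volume.restrict (Ioi L)))
    (hs : L ≤ s) (hq : Continuous q) {k : ℝ} (hk : ∀ᵐ t ∂volume.restrict (Ioc L s), k ≤ W t) :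
    k * ∫ t in L..s, q t ^ 2 ≤ ∫ t in L..s, W t * q t ^ 2 := by
  rw [← intervalIntegral.integral_const_mul, intervalIntegral.integral_of_le hs,
    intervalIntegral.integral_of_le hs]
  refine setIntegral_mono_ae_restrict ((hq.pow 2).const_mul k).integrableOn_Ioc
    (integrableOn_mul_of_memLp_top hW Ioc_subset_Ioi_self (hq.pow 2).integrableOn_Ioc) ?_
  filter_upwards [hk] with t ht using mul_le_mul_of_nonneg_right ht (sq_nonneg _)

theorem integral_deriv_sq_add_mul_integral_sq_le_energy
    (hW : MemLp W ⊤ (volume.restrict (Ioi L))) (hq : MemH1 L q) {k : ℝ}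
    (hk : ∀ᵐ t ∂volume.restrict (Ioi L), k ≤ W t) :
    (∫ t in Ioi L, deriv q t ^ 2) + k * ∫ t in Ioi L, q t ^ 2 ≤ energy W L q := by
  rw [energy, ← integral_const_mul,
    ← integral_add hq.integrableOn_deriv_sq (hq.integrableOn_sq.const_mul k)]
  refine integral_mono_ae (hq.integrableOn_deriv_sq.add (hq.integrableOn_sq.const_mul k))
    (integrableOn_energy hW hq) ?_
  filter_upwards [hk] with t ht
  simpa using mul_le_mul_of_nonneg_right ht (sq_nonneg (q t))

theorem energy_nonneg (hW : ∀ t, L < t → 0 ≤ W t) (q : ℝ → ℝ) : 0 ≤ energy W L q :=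
  setIntegral_nonneg measurableSet_Ioi fun t ht =>
    add_nonneg (sq_nonneg _) (mul_nonneg (hW t ht) (sq_nonneg _))

theorem integral_deriv_sq_add_energy_le (hW : MemLp W ⊤ (volume.restrict (Ioi L))) (hs : L ≤ s)
    (hq : MemH1 L q) {k : ℝ} (hk : ∀ᵐ t ∂volume.restrict (Ioc L s), k ≤ W t) :
    (∫ t in L..s, deriv q t ^ 2) + k * (∫ t in L..s, q t ^ 2) + energy W s q ≤ energy W L q := by
  have := mul_integral_sq_le_integral_mul_sq hW hs hq.continuous hk
  rw [energy_eq_add hW hs hq]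
  linarith

theorem groundEnergy_mul_integral_sq_le (hV : MemLp V ⊤ (volume.restrict (Ioi L)))
    (hq : MemH1 L q) : groundEnergy V L * ∫ t in Ioi L, q t ^ 2 ≤ energy V L q := by
  obtain ⟨M, -, hM⟩ := exists_ae_abs_le hV
  have hlower : ∀ {p}, MemH1 L p → -M * ∫ t in Ioi L, p t ^ 2 ≤ energy V L p := fun {p} hp => by
    have hdp : 0 ≤ ∫ t in Ioi L, deriv p t ^ 2 := integral_nonneg fun t => sq_nonneg _
    linarith [integral_deriv_sq_add_mul_integral_sq_le_energy hV hp
      (hM.mono fun t ht => (abs_le.1 ht).1)]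
  have hnorm : ∀ p : ℝ → ℝ, 0 ≤ ∫ t in Ioi L, p t ^ 2 := fun p =>
    integral_nonneg fun t => sq_nonneg (p t)
  rcases (hnorm q).eq_or_lt with hzero | hpos
  · simpa [← hzero] using hlower hq
  · rw [← le_div_iff₀ hpos]
    refine csInf_le ⟨-M, ?_⟩ ⟨q, hq, hpos.ne', rfl⟩
    rintro r ⟨p, hp, hne, rfl⟩
    exact (le_div_iff₀ (lt_of_le_of_ne (hnorm p) hne.symm)).2 (hlower hp)

theorem le_groundEnergy_iff (hV : MemLp V ⊤ (volume.restrict (Ioi L))) :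
    m ≤ groundEnergy V L ↔ ∀ q, MemH1 L q → 0 ≤ energy (fun t => V t - m) L q := by
  constructor
  · intro hm q hq
    rw [energy_sub_const hV hq, sub_nonneg]
    exact (mul_le_mul_of_nonneg_right hm (integral_nonneg fun t => sq_nonneg _)).trans
      (groundEnergy_mul_integral_sq_le hV hq)
  · intro h
    have hexp : ∫ t in Ioi L, rexp (-1 * t) ^ 2 ≠ 0 := by
      rw [integral_exp_neg_mul_sq one_pos]
      positivity
    refine le_csInf ⟨_, _, memH1_exp_neg_mul one_pos L, hexp, rfl⟩ ?_
    rintro r ⟨q, hq, hne, rfl⟩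
    have hpos := lt_of_le_of_ne (integral_nonneg fun t => sq_nonneg (q t)) hne.symm
    have := h q hq
    rw [energy_sub_const hV hq] at this
    rw [le_div_iff₀ hpos]
    linarith

/-- Coercivity of the form of `-d²/dt² + W` on `(L,∞)` in the `L²` norm, that is, the spectrum of
the operator is bounded below by a positive constant. -/
def Coercive (W : ℝ → ℝ) (L : ℝ) : Prop :=
  ∃ ε, 0 < ε ∧ ∀ q, MemH1 L q → ε * ∫ t in Ioi L, q t ^ 2 ≤ energy W L q

theorem lt_groundEnergy_of_coercive (hV : MemLp V ⊤ (volume.restrict (Ioi L)))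
    (h : Coercive (fun t => V t - m) L) : m < groundEnergy V L := by
  obtain ⟨ε, hε, hcoer⟩ := h
  refine (lt_add_of_pos_right m hε).trans_le ((le_groundEnergy_iff hV).2 fun q hq => ?_)
  have := hcoer q hq
  rw [energy_sub_const hV hq] at this ⊢
  linarith

end Energy

/-! ### Extending test functions to the left by a constant -/

theorem integral_exp_sub_div_le {ε : ℝ} (hε : 0 < ε) (t s : ℝ) :
    ∫ τ in t..s, rexp ((τ - s) / ε) ≤ ε := by
  have hderiv : ∀ τ ∈ uIcc t s,
      HasDerivAt (fun τ => ε * rexp ((τ - s) / ε)) (rexp ((τ - s) / ε)) τ := fun τ _ =>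
    ((((hasDerivAt_id τ).sub_const s).div_const ε).exp.const_mul ε).congr_deriv (by
      simp only [id]
      field_simp)
  rw [intervalIntegral.integral_eq_sub_of_hasDerivAt hderiv
    (Continuous.intervalIntegrable (by fun_prop) _ _), sub_self, zero_div, Real.exp_zero, mul_one]
  linarith [mul_pos hε (Real.exp_pos ((t - s) / ε))]

theorem exists_contDiff_deriv_eq {d : ℝ → ℝ} (hd : Continuous d) (s c : ℝ) :
    ∃ p : ℝ → ℝ, ContDiff ℝ 1 p ∧ deriv p = d ∧ ∀ t, p t = c + ∫ τ in s..t, d τ := by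
  have hp : ∀ t, HasDerivAt (fun t => c + ∫ τ in s..t, d τ) (d t) t := fun t =>
    (intervalIntegral.integral_hasDerivAt_right (hd.intervalIntegrable _ _)
      (hd.stronglyMeasurableAtFilter _ _) hd.continuousAt).const_add _
  have hderiv : deriv (fun t => c + ∫ τ in s..t, d τ) = d := funext fun t => (hp t).deriv
  exact ⟨_, contDiff_one_iff_deriv.2 ⟨fun t => (hp t).differentiableAt, by rwa [hderiv]⟩, hderiv,
    fun t => rfl⟩

theorem exists_contDiff_extension_left {q : ℝ → ℝ} (hq : ContDiff ℝ 1 q) (s : ℝ) {ε : ℝ}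
    (hε : 0 < ε) :
    ∃ p : ℝ → ℝ, ContDiff ℝ 1 p ∧ EqOn p q (Ici s) ∧ EqOn (deriv p) (deriv q) (Ici s) ∧
      (∀ t ≤ s, |p t - q s| ≤ |deriv q s| * ε) ∧
      ∀ a ≤ s, ∫ t in a..s, deriv p t ^ 2 ≤ deriv q s ^ 2 * ε := by
  have hqc : Continuous (deriv q) := hq.continuous_deriv_one
  -- the derivative of `p` decays exponentially to the left of `s`, at rate `1 / ε`
  set d : ℝ → ℝ := fun τ => deriv q (max τ s) * rexp (min (τ - s) 0 / ε) with hd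
  have hdc : Continuous d := by fun_prop
  have hd_right : ∀ t, s ≤ t → d t = deriv q t := fun t ht => by
    simp [hd, max_eq_left ht, min_eq_right (sub_nonneg.2 ht)]
  have hd_left : ∀ t, t ≤ s → d t = deriv q s * rexp ((t - s) / ε) := fun t ht => by
    simp [hd, max_eq_right ht, min_eq_left (sub_nonpos.2 ht)]
  obtain ⟨p, hp, hdp, hpt⟩ := exists_contDiff_deriv_eq hdc s (q s)
  refine ⟨p, hp, fun t ht => ?_, fun t ht => hdp ▸ hd_right t ht, fun t ht => ?_, fun a ha => ?_⟩
  · have hint : ∫ τ in s..t, d τ = ∫ τ in s..t, deriv q τ :=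
      intervalIntegral.integral_congr fun τ hτ => hd_right τ (uIcc_of_le (mem_Ici.1 ht) ▸ hτ).1
    rw [hpt, hint, intervalIntegral.integral_deriv_eq_sub
      (fun x _ => hq.differentiable one_ne_zero x) (hqc.intervalIntegrable _ _), add_sub_cancel]
  · have hint : ∫ τ in t..s, d τ = deriv q s * ∫ τ in t..s, rexp ((τ - s) / ε) := by
      rw [← intervalIntegral.integral_const_mul]
      exact intervalIntegral.integral_congr fun τ hτ => hd_left τ (uIcc_of_le ht ▸ hτ).2
    rw [hpt, add_sub_cancel_left, intervalIntegral.integral_symm, abs_neg, hint, abs_mul,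
      abs_of_nonneg (intervalIntegral.integral_nonneg ht fun τ _ => (Real.exp_pos _).le)]
    gcongr
    exact integral_exp_sub_div_le hε t s
  · rw [hdp]
    calc ∫ t in a..s, d t ^ 2 ≤ ∫ t in a..s, deriv q s ^ 2 * rexp ((t - s) / ε) := by
          refine intervalIntegral.integral_mono_on ha ((hdc.pow 2).intervalIntegrable _ _)
            (Continuous.intervalIntegrable (by fun_prop) _ _) fun t ht => ?_
          rw [hd_left t ht.2, mul_pow]
          gcongr
          exact pow_le_of_le_one (Real.exp_pos _).le (Real.exp_le_one_iff.2 <|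
            div_nonpos_of_nonpos_of_nonneg (sub_nonpos.2 ht.2) hε.le) two_ne_zero
      _ ≤ deriv q s ^ 2 * ε := by
          rw [intervalIntegral.integral_const_mul]
          gcongr
          exact integral_exp_sub_div_le hε a s

section Energy

variable {W q : ℝ → ℝ} {L a s : ℝ}

theorem integral_mul_sq_le_of_abs_sub_le {p : ℝ → ℝ} (hp : Continuous p) {M c e : ℝ}
    (hW : MemLp W ⊤ (volume.restrict (Ioi a))) (hM : ∀ᵐ t ∂volume.restrict (Ioi a), |W t| ≤ M)
    (has : a ≤ s) (hpc : ∀ t ≤ s, |p t - c| ≤ e) :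
    ∫ t in a..s, W t * p t ^ 2 ≤
      (∫ t in a..s, W t) * c ^ 2 + (s - a) * (M * (e * (2 * |c| + e))) := by
  have hWi := intervalIntegrable_of_memLp_top hW has
  have hle : ∫ t in a..s, W t * p t ^ 2 ≤
      ∫ t in a..s, (W t * c ^ 2 + M * (e * (2 * |c| + e))) := by
    rw [intervalIntegral.integral_of_le has, intervalIntegral.integral_of_le has]
    refine setIntegral_mono_ae_restrict
      (integrableOn_mul_of_memLp_top hW Ioc_subset_Ioi_self (hp.pow 2).integrableOn_Ioc)
      (((hWi.mul_const _).add (by simp)).1) ?_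
    filter_upwards [ae_restrict_mem measurableSet_Ioc,
      ae_mono (Measure.restrict_mono Ioc_subset_Ioi_self le_rfl) hM] with t ht htM
    have hsub := hpc t ht.2
    have hadd : |p t + c| ≤ 2 * |c| + e := by
      calc |p t + c| = |2 * c + (p t - c)| := by ring_nf
        _ ≤ |2 * c| + |p t - c| := abs_add_le _ _
        _ ≤ 2 * |c| + e := by rw [abs_mul, abs_two]; gcongr
    have hprod : |W t * (p t ^ 2 - c ^ 2)| ≤ M * (e * (2 * |c| + e)) := by
      rw [sq_sub_sq, mul_comm (p t + c), abs_mul, abs_mul]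
      have he : 0 ≤ e := (abs_nonneg _).trans hsub
      have hM0 : 0 ≤ M := (abs_nonneg _).trans htM
      gcongr
    linarith [le_of_abs_le hprod]
  rwa [intervalIntegral.integral_add (hWi.mul_const _) (by simp),
    intervalIntegral.integral_mul_const, intervalIntegral.integral_const, smul_eq_mul] at hle

/-- The inequality is `0 ≤ energy W a p` for the extension `p` of `q` by the constant `q s`; as
`p` need not be `C¹`, it is approximated. -/
theorem integral_mul_sq_add_energy_nonneg (hW : MemLp W ⊤ (volume.restrict (Ioi a)))
    (has : a ≤ s) (hnonneg : ∀ p, MemH1 a p → 0 ≤ energy W a p) (hq : MemH1 s q) :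
    0 ≤ (∫ t in a..s, W t) * q s ^ 2 + energy W s q := by
  obtain ⟨M, -, hM⟩ := exists_ae_abs_le hW
  set D := deriv q s
  have happrox : ∀ ε : ℝ, 0 < ε → 0 ≤ D ^ 2 * ε + ((∫ t in a..s, W t) * q s ^ 2 +
      (s - a) * (M * (|D| * ε * (2 * |q s| + |D| * ε)))) + energy W s q := fun ε hε => by
    obtain ⟨p, hp, hpq, hdpq, hclose, hsmall⟩ := exists_contDiff_extension_left hq.contDiff s hε
    have hpmem := hq.of_eqOn_Ici hp has hpq hdpq
    have hpos := hnonneg p hpmem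
    rw [energy_eq_add hW has hpmem, energy_congr hpq hdpq] at hpos
    linarith [hsmall a has, integral_mul_sq_le_of_abs_sub_le hp.continuous hW hM has hclose]
  have hlim : Filter.Tendsto (fun ε : ℝ => D ^ 2 * ε + ((∫ t in a..s, W t) * q s ^ 2 +
      (s - a) * (M * (|D| * ε * (2 * |q s| + |D| * ε)))) + energy W s q)
      (nhdsWithin 0 (Ioi 0)) (nhds ((∫ t in a..s, W t) * q s ^ 2 + energy W s q)) :=
    (Continuous.tendsto' (by fun_prop) _ _ (by ring)).mono_left nhdsWithin_le_nhds
  exact ge_of_tendsto hlim (by filter_upwards [self_mem_nhdsWithin] with ε hε using happrox ε hε)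

/-! ### Coercivity -/

theorem integral_deriv_sq_add_energy_le_of_abs_le (hW : MemLp W ⊤ (volume.restrict (Ioi L)))
    {M : ℝ} (hM : ∀ᵐ t ∂volume.restrict (Ioi L), |W t| ≤ M) (hs : L ≤ s) (hq : MemH1 L q) :
    (∫ t in L..s, deriv q t ^ 2) + energy W s q ≤ energy W L q + M * ∫ t in L..s, q t ^ 2 := by
  have hM' : ∀ᵐ t ∂volume.restrict (Ioc L s), -M ≤ W t := by
    filter_upwards [ae_mono (Measure.restrict_mono Ioc_subset_Ioi_self le_rfl) hM] with t ht
      using (abs_le.1 ht).1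
  linarith [integral_deriv_sq_add_energy_le hW hs hq hM']

/-- Grönwall's inequality for `s ↦ ∫_L^s q²`: the energy on `(s,∞)` being nonnegative, the energy
on `(L,∞)` controls `∫_L^s q'²` and hence `q(s)²` in terms of `∫_L^s q²`. -/
theorem exists_integral_sq_le_mul_energy {t₁ c : ℝ} (hW : MemLp W ⊤ (volume.restrict (Ioi L)))
    (hL : L ≤ t₁) (hc : 0 < c)
    (hnonneg : ∀ q, MemH1 L q → ∀ s ∈ Icc L t₁, 0 ≤ energy W s q)
    (htrace : ∀ q, MemH1 L q → c * q L ^ 2 ≤ energy W L q) :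
    ∃ K, 0 ≤ K ∧ ∀ q, MemH1 L q → ∫ t in L..t₁, q t ^ 2 ≤ K * energy W L q := by
  obtain ⟨M, hMpos, hM⟩ := exists_ae_abs_le hW
  set ℓ := t₁ - L + 1
  have : 0 < ℓ := by linarith
  set B := 2 * ℓ * M
  have hBpos : 0 < B := by positivity
  refine ⟨(2 / c + 2 * ℓ) / B * (rexp (B * (t₁ - L)) - 1), ?_, fun q hq => ?_⟩
  · have := Real.one_le_exp (mul_nonneg hBpos.le (sub_nonneg.2 hL))
    have : 0 ≤ rexp (B * (t₁ - L)) - 1 := by linarith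
    positivity
  set F := energy W L q
  have hpointwise : ∀ s ∈ Ico L t₁, q s ^ 2 ≤ (2 / c + 2 * ℓ) * F + B * ∫ t in L..s, q t ^ 2 := by
    intro s hs
    have henergy := integral_deriv_sq_add_energy_le_of_abs_le hW hM hs.1 hq
    have hderiv : ∫ t in L..s, deriv q t ^ 2 ≤ F + M * ∫ t in L..s, q t ^ 2 := by
      linarith [hnonneg q hq s ⟨hs.1, hs.2.le⟩]
    have htrace' : q L ^ 2 ≤ F / c := (le_div_iff₀' hc).2 (htrace q hq)
    calc q s ^ 2 ≤ 2 * q L ^ 2 + 2 * (s - L) * ∫ t in L..s, deriv q t ^ 2 :=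
          sq_le_sq_add_integral_deriv_sq hq.contDiff (left_mem_Icc.2 hs.1) (right_mem_Icc.2 hs.1)
      _ ≤ 2 * (F / c) + 2 * ℓ * (F + M * ∫ t in L..s, q t ^ 2) := by
          have := integral_sq_nonneg (deriv q) hs.1
          have : s - L ≤ ℓ := by linarith [hs.2]
          gcongr
      _ = (2 / c + 2 * ℓ) * F + B * ∫ t in L..s, q t ^ 2 := by ring
  refine (integral_le_gronwallBound (hq.continuous.pow 2) (fun t => sq_nonneg (q t)) hL
    hpointwise).trans_eq ?_
  rw [gronwallBound_of_K_ne_0 hBpos.ne']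
  ring

theorem coercive_of_forall_energy_nonneg {t₁ c δ : ℝ} (hW : MemLp W ⊤ (volume.restrict (Ioi L)))
    (hL : L ≤ t₁) (hc : 0 < c) (hδ : 0 < δ)
    (hnonneg : ∀ q, MemH1 L q → ∀ s ∈ Icc L t₁, 0 ≤ energy W s q)
    (htrace : ∀ q, MemH1 L q → c * q L ^ 2 ≤ energy W L q)
    (hWδ : ∀ t, t₁ < t → δ ≤ W t) : Coercive W L := by
  obtain ⟨M, hMpos, hM⟩ := exists_ae_abs_le hW
  obtain ⟨K, hK, hbound⟩ := exists_integral_sq_le_mul_energy hW hL hc hnonneg htrace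
  have hpos : 0 < K + (1 + M * K) / δ := by positivity
  refine ⟨(K + (1 + M * K) / δ)⁻¹, by positivity, fun q hq => ?_⟩
  rw [inv_mul_le_iff₀ hpos, hq.integral_sq_eq_add hL, add_mul]
  refine add_le_add (hbound q hq) ?_
  rw [div_mul_eq_mul_div, le_div_iff₀' hδ]
  calc δ * ∫ t in Ioi t₁, q t ^ 2 ≤ energy W t₁ q := by
        have htail := integral_deriv_sq_add_mul_integral_sq_le_energy (memLp_top_mono hW hL)
          (hq.mono hL) (ae_restrict_of_forall_mem measurableSet_Ioi hWδ)
        have : 0 ≤ ∫ t in Ioi t₁, deriv q t ^ 2 := integral_nonneg fun t => sq_nonneg _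
        linarith
    _ ≤ energy W L q + M * ∫ t in L..t₁, q t ^ 2 := by
        linarith [integral_deriv_sq_add_energy_le_of_abs_le hW hM hL hq,
          integral_sq_nonneg (deriv q) hL]
    _ ≤ (1 + M * K) * energy W L q := by
        linarith [mul_le_mul_of_nonneg_left (hbound q hq) hMpos.le]

theorem exists_pos_mul_sq_le_energy {c d η : ℝ} (hW : MemLp W ⊤ (volume.restrict (Ioi L)))
    (hLc : L ≤ c) (hcd : c < d) (hη : 0 < η) (hWnonneg : ∀ t ∈ Ioc L c, 0 ≤ W t)
    (hWη : ∀ t ∈ Ioc c d, η ≤ W t) (hnonneg : ∀ q, MemH1 d q → 0 ≤ energy W d q) :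
    ∃ κ, 0 < κ ∧ ∀ q, MemH1 L q → κ * q L ^ 2 ≤ energy W L q := by
  have hLd : L < d := hLc.trans_lt hcd
  set C := 2 / η + 2 * (d - c) * (d - L)
  have : 0 < d - c := sub_pos.2 hcd
  have : 0 < d - L := sub_pos.2 hLd
  have hCpos : 0 < C := by positivity
  refine ⟨(d - c) / C, by positivity, fun q hq => ?_⟩
  have hleft := integral_deriv_sq_add_energy_le (k := 0) hW hLc hq
    (ae_restrict_of_forall_mem measurableSet_Ioc hWnonneg)
  have hright := integral_deriv_sq_add_energy_le (memLp_top_mono hW hLc) hcd.le (hq.mono hLc)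
    (ae_restrict_of_forall_mem measurableSet_Ioc hWη)
  have htail := hnonneg q (hq.mono hLd.le)
  have hadd : (∫ t in L..d, deriv q t ^ 2) =
      (∫ t in L..c, deriv q t ^ 2) + ∫ t in c..d, deriv q t ^ 2 :=
    (intervalIntegral.integral_add_adjacent_intervals
      ((hq.continuous_deriv.pow 2).intervalIntegrable _ _)
      ((hq.continuous_deriv.pow 2).intervalIntegrable _ _)).symm
  have hsq_nonneg := integral_sq_nonneg q hcd.le
  have hderiv : ∫ t in L..d, deriv q t ^ 2 ≤ energy W L q := by
    linarith [mul_nonneg hη.le hsq_nonneg]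
  have hsq : ∫ t in c..d, q t ^ 2 ≤ energy W L q / η := (le_div_iff₀' hη).2 <| by
    linarith [integral_sq_nonneg (deriv q) hLd.le]
  rw [div_mul_eq_mul_div, div_le_iff₀ hCpos]
  calc (d - c) * q L ^ 2 ≤ _ := mul_sq_le_integral_sq_add_integral_deriv_sq hq.contDiff
        hLc hcd.le le_rfl (left_mem_Icc.2 hLd.le)
    _ ≤ 2 * (energy W L q / η) + 2 * (d - c) * (d - L) * energy W L q := by gcongr
    _ = energy W L q * C := by ring

end Energy

section GroundEnergy

open Filter Topology

variable {V : ℝ → ℝ} {L s m : ℝ}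

theorem coercive_of_le {W : ℝ → ℝ} {δ : ℝ} (hW : MemLp W ⊤ (volume.restrict (Ioi L)))
    (hδ : 0 < δ) (hWδ : ∀ t, L < t → δ ≤ W t) : Coercive W L := by
  refine ⟨δ, hδ, fun q hq => ?_⟩
  have hlower := integral_deriv_sq_add_mul_integral_sq_le_energy hW hq
    (ae_restrict_of_forall_mem measurableSet_Ioi hWδ)
  have hderiv : 0 ≤ ∫ t in Ioi L, deriv q t ^ 2 := integral_nonneg fun t => sq_nonneg _
  linarith

theorem le_groundEnergy_of_forall_Ioc_le (hV : MemLp V ⊤ (volume.restrict (Ioi L)))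
    (hs : L ≤ s) (hm : ∀ t ∈ Ioc L s, m ≤ V t) (h : m ≤ groundEnergy V s) :
    m ≤ groundEnergy V L := by
  refine (le_groundEnergy_iff hV).2 fun q hq => ?_
  have hsplit := integral_deriv_sq_add_energy_le (k := 0) (memLp_top_sub_const hV m) hs hq
    (ae_restrict_of_forall_mem measurableSet_Ioc fun t ht => sub_nonneg.2 (hm t ht))
  have htail := (le_groundEnergy_iff (memLp_top_mono hV hs)).1 h q (hq.mono hs)
  linarith [integral_sq_nonneg (deriv q) hs]

theorem neg_integral_mul_sq_le_energy (hV : MemLp V ⊤ (volume.restrict (Ioi L)))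
    (hs : L ≤ s) (h : m ≤ groundEnergy V L) {q : ℝ → ℝ} (hq : MemH1 s q) :
    -(∫ t in L..s, (V t - m)) * q s ^ 2 ≤ energy (fun t => V t - m) s q := by
  linarith [integral_mul_sq_add_energy_nonneg (memLp_top_sub_const hV m) hs
    ((le_groundEnergy_iff hV).1 h) hq]

theorem le_groundEnergy_of_integral_nonpos (hV : MemLp V ⊤ (volume.restrict (Ioi L)))
    (hs : L ≤ s) (hint : ∫ t in L..s, (V t - m) ≤ 0) (h : m ≤ groundEnergy V L) :
    m ≤ groundEnergy V s :=
  (le_groundEnergy_iff (memLp_top_mono hV hs)).2 fun q hq =>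
    (mul_nonneg (neg_nonneg.2 hint) (sq_nonneg (q s))).trans
      (neg_integral_mul_sq_le_energy hV hs h hq)

theorem exists_pos_mul_sq_le_energy_of_lt_groundEnergy
    (hV : MemLp V ⊤ (volume.restrict (Ioi L))) (hm : m < groundEnergy V L) :
    ∃ κ, 0 < κ ∧ ∀ q, MemH1 L q → κ * q L ^ 2 ≤ energy (fun t => V t - m) L q := by
  have hW := memLp_top_sub_const hV m
  obtain ⟨M, hM, hbound⟩ := exists_ae_abs_le hW
  set g := groundEnergy V L - m
  have hg : 0 < g := sub_pos.2 hm
  refine ⟨(2 / g + 2 * (1 + M / g))⁻¹, by positivity, fun q hq => ?_⟩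
  set E := energy (fun t => V t - m) L q with hE
  have hsq : ∫ t in Ioi L, q t ^ 2 ≤ E / g := by
    rw [le_div_iff₀' hg, hE, energy_sub_const hV hq, sub_mul]
    exact sub_le_sub_right (groundEnergy_mul_integral_sq_le hV hq) _
  have hderiv : ∫ t in Ioi L, deriv q t ^ 2 ≤ E + M * (E / g) := by
    have hlower := integral_deriv_sq_add_mul_integral_sq_le_energy hW hq
      (hbound.mono fun t ht => (abs_le.1 ht).1)
    linarith [mul_le_mul_of_nonneg_left hsq hM.le]
  have hL1 : L ≤ L + 1 := by linarith
  have hval := mul_sq_le_integral_sq_add_integral_deriv_sq hq.contDiff le_rfl hL1 le_rfl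
    (left_mem_Icc.2 hL1)
  rw [inv_mul_le_iff₀ (by positivity)]
  calc q L ^ 2 ≤ 2 * (E / g) + 2 * (E + M * (E / g)) := by
        linarith [hq.intervalIntegral_sq_le hL1, hq.intervalIntegral_deriv_sq_le hL1]
    _ = (2 / g + 2 * (1 + M / g)) * E := by ring

theorem eventually_le_groundEnergy_nhdsLT {L₀ : ℝ} (hV : MemLp V ⊤ (volume.restrict (Ioi L₀)))
    (hL₀ : L₀ < L) (hm : m < groundEnergy V L) : ∀ᶠ x in 𝓝[<] L, m ≤ groundEnergy V x := by
  have hW := memLp_top_sub_const hV m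
  obtain ⟨M, hM, hbound⟩ := exists_ae_abs_le hW
  obtain ⟨κ, hκ, htrace⟩ :=
    exists_pos_mul_sq_le_energy_of_lt_groundEnergy (memLp_top_mono hV hL₀.le) hm
  have hsmall : ∀ᶠ x in 𝓝 L, L₀ < x ∧ M * (2 * (L - x)) < κ ∧
      M * (2 * (L - x) ^ 2) < 1 := by
    refine (lt_mem_nhds hL₀).and (.and ?_ ?_) <;>
      exact ContinuousAt.eventually_lt (by fun_prop) continuousAt_const (by simp [hκ])
  filter_upwards [hsmall.filter_mono nhdsWithin_le_nhds, self_mem_nhdsWithin]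
    with x ⟨hx₀, hxκ, hx1⟩ hxL
  have hxL' : x ≤ L := le_of_lt hxL
  refine (le_groundEnergy_iff (memLp_top_mono hV hx₀.le)).2 fun q hq => ?_
  have hsplit := integral_deriv_sq_add_energy_le_of_abs_le (memLp_top_mono hW hx₀.le)
    (ae_mono (Measure.restrict_mono (Ioi_subset_Ioi hx₀.le) le_rfl) hbound) hxL' hq
  have hsq := integral_sq_le_sq_add_integral_deriv_sq hq.contDiff (right_mem_Icc.2 hxL')
  set D := ∫ t in x..L, deriv q t ^ 2
  have hD : 0 ≤ D := integral_sq_nonneg _ hxL'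
  have hMsq : M * ∫ t in x..L, q t ^ 2 ≤ κ * q L ^ 2 + D := by
    calc M * ∫ t in x..L, q t ^ 2
        ≤ M * ((L - x) * (2 * q L ^ 2 + 2 * (L - x) * D)) := by gcongr
      _ = M * (2 * (L - x)) * q L ^ 2 + M * (2 * (L - x) ^ 2) * D := by ring
      _ ≤ κ * q L ^ 2 + D :=
          add_le_add (by gcongr) (mul_le_of_le_one_left hD hx1.le)
  linarith [htrace q (hq.mono hxL')]

end GroundEnergy

/-! ### Potential wells -/

/-- A potential on `(α,∞)` that falls continuously from `+∞` to its minimum at `β`, and then rises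
to a bounded height above its minimum. -/
structure IsPotentialWell (V : ℝ → ℝ) (α β : ℝ) : Prop where
  lt : α < β
  strictAntiOn : StrictAntiOn V (Ioc α β)
  continuousOn : ContinuousOn V (Ioc α β)
  tendsto_atTop : Filter.Tendsto V (nhdsWithin α (Ioi α)) Filter.atTop
  monotoneOn : MonotoneOn V (Ici β)
  bddAbove : BddAbove (V '' Ici β)
  exists_gt : ∃ T ∈ Ici β, V β < V T

namespace IsPotentialWell

open Filter Topology

variable {V : ℝ → ℝ} {α β a L : ℝ}

theorem apply_right_le (hV : IsPotentialWell V α β) {t : ℝ} (ht : α < t) : V β ≤ V t := by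
  rcases le_total t β with h | h
  · exact hV.strictAntiOn.antitoneOn ⟨ht, h⟩ ⟨hV.lt, le_rfl⟩ h
  · exact hV.monotoneOn self_mem_Ici h h

theorem memLp_top (hV : IsPotentialWell V α β) (hL : α < L) :
    MemLp V ⊤ (volume.restrict (Ioi L)) := by
  set c := min L β
  have hc : α < c := lt_min hL hV.lt
  have hcβ : c ≤ β := min_le_right _ _
  refine memLp_top_mono (L := c) ?_ (min_le_left _ _)
  obtain ⟨B, hB⟩ := hV.bddAbove
  have hmeas : AEMeasurable V (volume.restrict (Ioi c)) := by
    rw [← Ioc_union_Ioi_eq_Ioi hcβ, aemeasurable_union_iff]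
    exact ⟨aemeasurable_restrict_of_antitoneOn measurableSet_Ioc
      (hV.strictAntiOn.antitoneOn.mono (Ioc_subset_Ioc_left hc.le)),
      aemeasurable_restrict_of_monotoneOn measurableSet_Ioi
        (hV.monotoneOn.mono Ioi_subset_Ici_self)⟩
  refine memLp_top_of_bound hmeas.aestronglyMeasurable (max |V β| |max (V c) B|)
    (ae_restrict_of_forall_mem measurableSet_Ioi fun t ht =>
      abs_le_max_abs_abs (hV.apply_right_le (hc.trans ht)) (le_max_iff.2 ?_))
  rcases le_total t β with h | h
  · exact .inl (hV.strictAntiOn.antitoneOn ⟨hc, hcβ⟩ ⟨hc.trans ht, h⟩ (le_of_lt ht))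
  · exact .inr (hB ⟨t, h, rfl⟩)

theorem apply_right_lt_groundEnergy (hV : IsPotentialWell V α β) : V β < groundEnergy V β := by
  obtain ⟨T, hT, hVT⟩ := hV.exists_gt
  have hW := memLp_top_sub_const (hV.memLp_top hV.lt) (V β)
  have hnonneg : ∀ t, α < t → 0 ≤ V t - V β := fun t ht => sub_nonneg.2 (hV.apply_right_le ht)
  have hT_le : ∀ t, T < t → V T - V β ≤ V t - V β := fun t ht =>
    sub_le_sub_right (hV.monotoneOn hT (le_trans hT ht.le) ht.le) _
  obtain ⟨κ, hκ, htrace⟩ := exists_pos_mul_sq_le_energy hW hT (lt_add_one T) (sub_pos.2 hVT)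
    (fun t ht => hnonneg t (hV.lt.trans ht.1)) (fun t ht => hT_le t ht.1)
    (fun q _ => energy_nonneg (fun t ht => hnonneg t (by linarith [hV.lt, mem_Ici.1 hT])) q)
  exact lt_groundEnergy_of_coercive (hV.memLp_top hV.lt) <|
    coercive_of_forall_energy_nonneg hW hT hκ (sub_pos.2 hVT)
      (fun q _ s hs => energy_nonneg (fun t ht => hnonneg t (by linarith [hV.lt, hs.1])) q)
      htrace hT_le

theorem eventually_le_groundEnergy (hV : IsPotentialWell V α β) (ha : a ∈ Ioc α β)
    (h : V a < groundEnergy V a) : ∀ᶠ x in 𝓝[<] a, V x ≤ groundEnergy V x := by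
  obtain ⟨m, hVm, hm⟩ := exists_between h
  obtain ⟨c, hc, hca⟩ := exists_between ha.1
  have hcont : Tendsto V (𝓝[<] a) (𝓝 (V a)) :=
    ((hV.continuousOn a ha).mono_left (nhdsWithin_le_of_mem
      (mem_of_superset (Ioo_mem_nhdsLT ha.1) fun x hx => ⟨hx.1, hx.2.le.trans ha.2⟩)))
  filter_upwards [hcont.eventually_lt_const hVm,
    eventually_le_groundEnergy_nhdsLT (hV.memLp_top hc) hca hm] with x hVx hx
    using hVx.le.trans hx

theorem apply_le_groundEnergy_right (hV : IsPotentialWell V α β) (ha : a ∈ Ioc α β)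
    (h : V a ≤ groundEnergy V a) : V a ≤ groundEnergy V β := by
  refine le_groundEnergy_of_integral_nonpos (hV.memLp_top ha.1) ha.2 ?_ h
  rw [intervalIntegral.integral_of_le ha.2]
  refine setIntegral_nonpos measurableSet_Ioc fun t ht => sub_nonpos.2 ?_
  exact hV.strictAntiOn.antitoneOn ha ⟨ha.1.trans ht.1, ht.2⟩ ht.1.le

theorem exists_groundEnergy_eq (hV : IsPotentialWell V α β) :
    ∃ a ∈ Ioo α β, groundEnergy V a = V a := by
  set S := {x ∈ Ioo α β | V x ≤ groundEnergy V x}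
  obtain ⟨x₀, hx₀⟩ : S.Nonempty := by
    have hev := hV.eventually_le_groundEnergy ⟨hV.lt, le_rfl⟩ hV.apply_right_lt_groundEnergy
    exact ((eventually_mem_set.2 (Ioo_mem_nhdsLT hV.lt)).and hev).exists
  obtain ⟨c, hc, hcV⟩ : ∃ c, α < c ∧ Ioo α c ⊆ {x | groundEnergy V β < V x} :=
    mem_nhdsGT_iff_exists_Ioo_subset.1
      (hV.tendsto_atTop.eventually_gt_atTop (groundEnergy V β))
  have hlower : ∀ x ∈ S, c ≤ x := fun x hx => by
    by_contra! hxc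
    exact (hV.apply_le_groundEnergy_right ⟨hx.1.1, hx.1.2.le⟩ hx.2).not_gt (hcV ⟨hx.1.1, hxc⟩)
  have hbdd : BddBelow S := ⟨c, hlower⟩
  set a := sInf S
  have haα : α < a := hc.trans_le (le_csInf ⟨x₀, hx₀⟩ hlower)
  have haβ : a < β := (csInf_le hbdd hx₀).trans_lt hx₀.1.2
  have hVa : V a ≤ groundEnergy V a := by
    by_contra! hlt
    have hcont : ContinuousAt V a := hV.continuousOn.continuousAt (Ioc_mem_nhds haα haβ)
    obtain ⟨x, hx, hxS⟩ := ((mem_closure_iff_frequently.1 (csInf_mem_closure ⟨x₀, hx₀⟩ hbdd)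
      ).and_eventually (hcont.eventually_const_lt hlt)).exists
    refine hxS.not_ge (le_groundEnergy_of_forall_Ioc_le (hV.memLp_top haα) (csInf_le hbdd hx)
      (fun t ht => ?_) hx.2)
    exact hV.strictAntiOn.antitoneOn ⟨haα.trans ht.1, ht.2.trans hx.1.2.le⟩
      ⟨hx.1.1, hx.1.2.le⟩ ht.2
  refine ⟨a, ⟨haα, haβ⟩, hVa.antisymm' (le_of_not_gt fun hlt => ?_)⟩
  obtain ⟨x, hxa, hx⟩ := ((eventually_mem_set.2 (Ioo_mem_nhdsLT haα)).and
    (hV.eventually_le_groundEnergy ⟨haα, haβ.le⟩ hlt)).exists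
  exact (csInf_le hbdd ⟨⟨hxa.1, hxa.2.trans haβ⟩, hx⟩).not_gt hxa.2

theorem sub_neg_of_mem_Ioc (hV : IsPotentialWell V α β) (ha : α < a) {t : ℝ}
    (ht : t ∈ Ioc a β) : V t - V a < 0 :=
  sub_neg.2 (hV.strictAntiOn ⟨ha, ht.1.le.trans ht.2⟩ ⟨ha.trans ht.1, ht.2⟩ ht.1)

theorem intervalIntegrable_sub (hV : IsPotentialWell V α β) (ha : α < a) {s : ℝ} (hs : a ≤ s) :
    IntervalIntegrable (fun t => V t - V a) volume a s :=
  intervalIntegrable_of_memLp_top (memLp_top_sub_const (hV.memLp_top ha) _) hs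

theorem integral_sub_neg (hV : IsPotentialWell V α β) (ha : α < a) {s : ℝ} (hs : s ∈ Ioc a β) :
    ∫ t in a..s, (V t - V a) < 0 := by
  rw [← neg_pos, ← intervalIntegral.integral_neg]
  exact intervalIntegral.intervalIntegral_pos_of_pos_on (hV.intervalIntegrable_sub ha hs.1.le).neg
    (fun t ht => neg_pos.2 (hV.sub_neg_of_mem_Ioc ha ⟨ht.1, ht.2.le.trans hs.2⟩)) hs.1

theorem exists_apply_lt (hV : IsPotentialWell V α β) (ha : a ∈ Ioo α β)
    (h : V a ≤ groundEnergy V a) : ∃ T ∈ Ici β, V a < V T := by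
  by_contra! hle
  set k := -∫ t in a..β, (V t - V a)
  have hk : 0 < k := neg_pos.2 (hV.integral_sub_neg ha.1 ⟨ha.2, le_rfl⟩)
  have hq := memH1_exp_neg_mul hk β
  have hlower := neg_integral_mul_sq_le_energy (hV.memLp_top ha.1) ha.2.le h hq
  have hupper : energy (fun t => V t - V a) β (fun t => rexp (-k * t)) ≤
      ∫ t in Ioi β, deriv (fun t => rexp (-k * t)) t ^ 2 := by
    refine setIntegral_mono_on (integrableOn_energy (memLp_top_sub_const (hV.memLp_top hV.lt) _) hq)
      hq.integrableOn_deriv_sq measurableSet_Ioi fun t ht => ?_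
    exact add_le_of_nonpos_right
      (mul_nonpos_of_nonpos_of_nonneg (sub_nonpos.2 (hle t (mem_Ici_of_Ioi ht))) (sq_nonneg _))
  simp only [deriv_exp_neg_mul, mul_pow, neg_sq, integral_const_mul,
    integral_exp_neg_mul_sq hk] at hupper
  have hhalf : k ^ 2 * (rexp (-k * β) ^ 2 / (2 * k)) = k * rexp (-k * β) ^ 2 / 2 := by
    field_simp
  linarith [mul_pos hk (pow_pos (exp_pos (-k * β)) 2)]

theorem exists_forall_integral_sub_neg (hV : IsPotentialWell V α β) (ha : a ∈ Ioo α β)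
    {T : ℝ} (hT : T ∈ Ici β) (hVT : V a < V T) :
    ∃ t₁ δ, 0 < δ ∧ (∀ t, t₁ < t → δ ≤ V t - V a) ∧
      ∀ s ∈ Ioc a t₁, ∫ t in a..s, (V t - V a) < 0 := by
  set S := {t ∈ Ici β | V a < V t}
  have hSne : S.Nonempty := ⟨T, hT, hVT⟩
  have hbdd : BddBelow S := ⟨β, fun t ht => ht.1⟩
  set t₀ := sInf S
  have ht₀ : β ≤ t₀ := le_csInf hSne fun t ht => ht.1
  have hneg : ∀ s ∈ Ioc a t₀, ∫ t in a..s, (V t - V a) < 0 := fun s hs => by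
    rcases le_total s β with hsβ | hsβ
    · exact hV.integral_sub_neg ha.1 ⟨hs.1, hsβ⟩
    have hplateau : ∫ t in β..s, (V t - V a) ≤ 0 := by
      rw [intervalIntegral.integral_of_le hsβ, integral_Ioc_eq_integral_Ioo]
      refine setIntegral_nonpos measurableSet_Ioo fun t ht =>
        sub_nonpos.2 (le_of_not_gt fun h => ?_)
      exact (csInf_le hbdd ⟨ht.1.le, h⟩).not_gt (ht.2.trans_le hs.2)
    rw [← intervalIntegral.integral_add_adjacent_intervals
      (hV.intervalIntegrable_sub ha.1 ha.2.le)
      (intervalIntegrable_of_memLp_top (memLp_top_sub_const (hV.memLp_top hV.lt) _) hsβ)]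
    linarith [hV.integral_sub_neg ha.1 ⟨ha.2, le_rfl⟩]
  have hcont : ContinuousWithinAt (fun s => ∫ t in a..s, (V t - V a)) (Ici t₀) t₀ := by
    have hle : a ≤ t₀ + 1 := by linarith [ha.2]
    have := intervalIntegral.continuousOn_primitive_interval'
      (hV.intervalIntegrable_sub ha.1 hle) left_mem_uIcc t₀
    rw [uIcc_of_le hle] at this
    exact (this ⟨ha.2.le.trans ht₀, by linarith⟩).mono_of_mem_nhdsWithin
      (mem_of_superset (Icc_mem_nhdsGE (lt_add_one t₀))
        (Icc_subset_Icc_left (ha.2.le.trans ht₀)))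
  obtain ⟨t₁, ht₁, hsub⟩ := mem_nhdsGE_iff_exists_Icc_subset.1
    (hcont.eventually_lt_const (hneg t₀ ⟨ha.2.trans_le ht₀, le_rfl⟩))
  obtain ⟨T', hT', hT't₁⟩ := exists_lt_of_csInf_lt hSne ht₁
  refine ⟨t₁, V T' - V a, sub_pos.2 hT'.2, fun t ht => ?_, fun s hs => ?_⟩
  · have hT't := hT't₁.le.trans ht.le
    exact sub_le_sub_right (hV.monotoneOn hT'.1 (le_trans hT'.1 hT't) hT't) _
  · rcases le_total s t₀ with hst | hst
    exacts [hneg s ⟨hs.1, hst⟩, hsub ⟨hst, hs.2⟩]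

theorem apply_le_groundEnergy (hV : IsPotentialWell V α β) (ha : a ∈ Ioo α β)
    (h : V a ≤ groundEnergy V a) (hL : L ∈ Ioc α a) : V a ≤ groundEnergy V L :=
  le_groundEnergy_of_forall_Ioc_le (hV.memLp_top hL.1) hL.2
    (fun _ ht => hV.strictAntiOn.antitoneOn ⟨hL.1.trans ht.1, ht.2.trans ha.2.le⟩
      ⟨ha.1, ha.2.le⟩ ht.2) h

theorem exists_pos_mul_sq_le_energy_sub (hV : IsPotentialWell V α β) (ha : a ∈ Ioo α β)
    (h : V a ≤ groundEnergy V a) (hL : L ∈ Ioo α a) :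
    ∃ c, 0 < c ∧ ∀ q, MemH1 L q → c * q L ^ 2 ≤ energy (fun t => V t - V a) L q := by
  obtain ⟨d, hLd, hda⟩ := exists_between hL.2
  have hd : d ∈ Ioc α β := ⟨hL.1.trans hLd, (hda.trans ha.2).le⟩
  refine exists_pos_mul_sq_le_energy (memLp_top_sub_const (hV.memLp_top hL.1) (V a)) le_rfl hLd
    (sub_pos.2 (hV.strictAntiOn hd ⟨ha.1, ha.2.le⟩ hda)) (by simp)
    (fun t ht => sub_le_sub_right ?_ _)
    ((le_groundEnergy_iff (hV.memLp_top hd.1)).1 (hV.apply_le_groundEnergy ha h ⟨hd.1, hda.le⟩))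
  exact hV.strictAntiOn.antitoneOn ⟨hL.1.trans ht.1, ht.2.trans hd.2⟩ hd ht.2

theorem coercive_sub_of_ne (hV : IsPotentialWell V α β) (ha : a ∈ Ioo α β)
    (h : V a ≤ groundEnergy V a) (hL : α < L) (hLa : L ≠ a) :
    Coercive (fun t => V t - V a) L := by
  obtain ⟨T, hT, hVT⟩ := hV.exists_apply_lt ha h
  obtain ⟨t₁, δ, hδ, hVδ, hneg⟩ := hV.exists_forall_integral_sub_neg ha hT hVT
  have hW := memLp_top_sub_const (hV.memLp_top hL) (V a)
  have hnonneg : ∀ s ∈ Ioc α t₁, ∀ q, MemH1 s q → 0 ≤ energy (fun t => V t - V a) s q := by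
    refine fun s hs => (le_groundEnergy_iff (hV.memLp_top hs.1)).1 ?_
    rcases le_or_gt s a with hsa | has
    · exact hV.apply_le_groundEnergy ha h ⟨hs.1, hsa⟩
    · exact le_groundEnergy_of_integral_nonpos (hV.memLp_top ha.1) has.le (hneg s ⟨has, hs.2⟩).le h
  rcases le_or_gt L t₁ with hLt | htL
  · obtain ⟨c, hc, htrace⟩ : ∃ c, 0 < c ∧
        ∀ q, MemH1 L q → c * q L ^ 2 ≤ energy (fun t => V t - V a) L q := by
      rcases hLa.lt_or_gt with hLa | haL
      · exact hV.exists_pos_mul_sq_le_energy_sub ha h ⟨hL, hLa⟩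
      · exact ⟨_, neg_pos.2 (hneg L ⟨haL, hLt⟩), fun q hq =>
          neg_integral_mul_sq_le_energy (hV.memLp_top ha.1) haL.le h hq⟩
    exact coercive_of_forall_energy_nonneg hW hLt hc hδ
      (fun q hq s hs => hnonneg s ⟨hL.trans_le hs.1, hs.2⟩ q (hq.mono hs.1)) htrace hVδ
  · exact coercive_of_le hW hδ fun t ht => hVδ t (htL.trans ht)

theorem exists_forall_ne_groundEnergy_lt (hV : IsPotentialWell V α β) :
    ∃ a ∈ Ioo α β, groundEnergy V a = V a ∧
      ∀ L, α < L → L ≠ a → groundEnergy V a < groundEnergy V L := by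
  obtain ⟨a, ha, heq⟩ := hV.exists_groundEnergy_eq
  exact ⟨a, ha, heq, fun L hL hLa => heq.trans_lt <| lt_groundEnergy_of_coercive
    (hV.memLp_top hL) (hV.coercive_sub_of_ne ha heq.ge hL hLa)⟩

end IsPotentialWell

/-! ### One-dimensional Poincaré inequalities -/

section Poincare

variable {a b : ℝ} {v : ℝ → ℝ}

theorem riccati_le_integral_deriv_sq (hab : a ≤ b) {w w' : ℝ → ℝ} (hv : ContDiff ℝ 1 v)
    (hw : ∀ x ∈ Icc a b, HasDerivAt w (w' x) x) (hw' : ContinuousOn w' (Icc a b)) :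
    w b * v b ^ 2 - w a * v a ^ 2 - ∫ x in a..b, (w' x + w x ^ 2) * v x ^ 2 ≤
      ∫ x in a..b, deriv v x ^ 2 := by
  have hvc : Continuous v := hv.continuous
  have hdc : Continuous (deriv v) := hv.continuous_deriv_one
  have hwc : ContinuousOn w (Icc a b) := fun x hx => (hw x hx).continuousAt.continuousWithinAt
  have hint : IntervalIntegrable (fun x => w' x * v x ^ 2 + w x * (2 * v x * deriv v x))
      volume a b := ContinuousOn.intervalIntegrable_of_Icc hab (by fun_prop)
  have hint' : IntervalIntegrable (fun x => (w' x + w x ^ 2) * v x ^ 2) volume a b :=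
    ContinuousOn.intervalIntegrable_of_Icc hab (by fun_prop)
  have hftc := intervalIntegral.integral_eq_sub_of_hasDerivAt (f := fun x => w x * v x ^ 2)
    (fun x hx => by
      rw [uIcc_of_le hab] at hx
      refine ((hw x hx).mul
        ((hv.differentiable one_ne_zero x).hasDerivAt.pow 2)).congr_deriv ?_
      simp) hint
  rw [← hftc, ← intervalIntegral.integral_sub hint hint']
  refine intervalIntegral.integral_mono_on hab (hint.sub hint')
    ((hdc.pow 2).intervalIntegrable _ _) fun x _ => ?_
  -- Completing the square: `v'² - (w v²)' + (w' + w²) v² = (v' - w v)²`.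
  nlinarith [sq_nonneg (deriv v x - w x * v x)]

theorem tan_le_integral_deriv_sq {θ c : ℝ} (hab : a ≤ b) (hv : ContDiff ℝ 1 v)
    (h : ∀ x ∈ Icc a b, c - θ * x ∈ Ioo (-(π / 2)) (π / 2)) :
    θ * tan (c - θ * b) * v b ^ 2 - θ * tan (c - θ * a) * v a ^ 2
      + θ ^ 2 * ∫ x in a..b, v x ^ 2 ≤ ∫ x in a..b, deriv v x ^ 2 := by
  have hcos : ∀ x ∈ Icc a b, cos (c - θ * x) ≠ 0 := fun x hx => (cos_pos_of_mem_Ioo (h x hx)).ne'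
  have hric := riccati_le_integral_deriv_sq hab (w := fun x => θ * tan (c - θ * x))
    (w' := fun x => -(θ ^ 2 / cos (c - θ * x) ^ 2)) hv
    (fun x hx => by
      have hlin : HasDerivAt (fun x : ℝ => c - θ * x) (-θ) x := by
        simpa using ((hasDerivAt_id x).const_mul θ).const_sub c
      refine (((hasDerivAt_tan (hcos x hx)).comp x hlin).const_mul θ).congr_deriv ?_
      ring)
    (ContinuousOn.neg <| continuousOn_const.div (by fun_prop) fun x hx =>
      pow_ne_zero 2 (hcos x hx))
  have hsolution : ∫ x in a..b, (-(θ ^ 2 / cos (c - θ * x) ^ 2)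
      + (θ * tan (c - θ * x)) ^ 2) * v x ^ 2 = ∫ x in a..b, -θ ^ 2 * v x ^ 2 := by
    refine intervalIntegral.integral_congr fun x hx => ?_
    rw [uIcc_of_le hab] at hx
    have := hcos x hx
    simp only [tan_eq_sin_div_cos]
    field_simp
    linear_combination θ ^ 2 * v x ^ 2 * sin_sq_add_cos_sq (c - θ * x)
  rw [hsolution, intervalIntegral.integral_const_mul] at hric
  linarith

theorem sq_mul_le_of_forall_lt {K N D : ℝ} (hK : 0 < K)
    (h : ∀ θ, 0 < θ → θ < K → θ ^ 2 * N ≤ D) : K ^ 2 * N ≤ D := by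
  have hlim : Filter.Tendsto (fun θ : ℝ => θ ^ 2 * N) (nhdsWithin K (Iio K))
      (nhds (K ^ 2 * N)) :=
    Continuous.continuousWithinAt (by fun_prop)
  refine le_of_tendsto hlim ?_
  filter_upwards [Ioo_mem_nhdsLT hK] with θ hθ using h θ hθ.1 hθ.2

theorem sq_mul_integral_sq_le_of_left_eq_zero (hab : a < b) (hv : ContDiff ℝ 1 v) (ha : v a = 0) :
    (π / (2 * (b - a))) ^ 2 * ∫ x in a..b, v x ^ 2 ≤ ∫ x in a..b, deriv v x ^ 2 := by
  have : 0 < b - a := sub_pos.2 hab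
  refine sq_mul_le_of_forall_lt (by positivity) fun θ hθ hθK => ?_
  rw [lt_div_iff₀ (by positivity)] at hθK
  have htan := tan_le_integral_deriv_sq (c := θ * b) (θ := θ) hab.le hv fun x hx =>
    ⟨by nlinarith [hx.2, pi_pos], by nlinarith [hx.1]⟩
  simpa [ha] using htan

theorem sq_mul_integral_sq_le_of_eq_zero (hab : a < b) (hv : ContDiff ℝ 1 v) (ha : v a = 0)
    (hb : v b = 0) :
    (π / (b - a)) ^ 2 * ∫ x in a..b, v x ^ 2 ≤ ∫ x in a..b, deriv v x ^ 2 := by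
  have : 0 < b - a := sub_pos.2 hab
  refine sq_mul_le_of_forall_lt (by positivity) fun θ hθ hθK => ?_
  rw [lt_div_iff₀ this] at hθK
  have htan := tan_le_integral_deriv_sq (c := θ * ((a + b) / 2)) (θ := θ) hab.le hv fun x hx =>
    ⟨by nlinarith [hx.2], by nlinarith [hx.1]⟩
  simpa [ha, hb] using htan

theorem sq_sub_two_mul_integral_sq_le (hv : ContDiff ℝ 1 v) (a : ℝ) :
    v a ^ 2 - 2 * ∫ x in a..a + 1, v x ^ 2 ≤ ∫ x in a..a + 1, deriv v x ^ 2 := by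
  have hvc : Continuous v := hv.continuous
  have hric := riccati_le_integral_deriv_sq (a := a) (b := a + 1) (w := fun x => x - a - 1)
    (w' := fun _ => 1) (le_add_of_nonneg_right zero_le_one) hv
    (fun x _ => ((hasDerivAt_id x).sub_const a).sub_const 1) continuousOn_const
  have hweight : ∫ x in a..a + 1, (1 + (x - a - 1) ^ 2) * v x ^ 2 ≤
      ∫ x in a..a + 1, 2 * v x ^ 2 := by
    refine intervalIntegral.integral_mono_on (by linarith)
      (Continuous.intervalIntegrable (by fun_prop) _ _)
      (Continuous.intervalIntegrable (by fun_prop) _ _) fun x hx => ?_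
    refine mul_le_mul_of_nonneg_right ?_ (sq_nonneg _)
    nlinarith [hx.1, hx.2]
  rw [intervalIntegral.integral_const_mul] at hweight
  simp only [add_sub_cancel_left, sub_self, zero_mul, zero_sub, neg_mul, one_mul] at hric
  linarith

theorem mul_tan_one_fifth_le_one : (π / 2 + 1 / 10) * tan (1 / 5) ≤ 1 := by
  have hcos : 1 - (1 / 5 : ℝ) ^ 2 / 2 ≤ cos (1 / 5) := one_sub_sq_div_two_le_cos
  have hsin : sin (1 / 5 : ℝ) ≤ 1 / 5 := sin_le (by norm_num)
  have hpos : 0 < cos (1 / 5 : ℝ) := by linarith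
  rw [tan_eq_sin_div_cos, mul_div_assoc', div_le_one hpos]
  nlinarith [pi_lt_d2, pi_gt_three]

theorem sq_mul_integral_sq_le_add_of_left_eq_zero (hv : ContDiff ℝ 1 v) (h : v (-1) = 0) :
    (π / 2 + 1 / 10) ^ 2 * ∫ x in (-1)..0, v x ^ 2 ≤
      (∫ x in (-1)..0, deriv v x ^ 2) + (∫ x in 0..1, deriv v x ^ 2)
        + 2 * ∫ x in 0..1, v x ^ 2 := by
  have hcorner := tan_le_integral_deriv_sq (a := -1) (b := 0) (c := -(1 / 5))
    (θ := π / 2 + 1 / 10) (by norm_num) hv fun x hx =>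
      ⟨by nlinarith [hx.2, pi_gt_three], by nlinarith [hx.1, pi_gt_three]⟩
  have harm := sq_sub_two_mul_integral_sq_le hv 0
  simp only [mul_zero, sub_zero, tan_neg, h, zero_add] at hcorner harm
  nlinarith [mul_le_of_le_one_left (sq_nonneg (v 0)) mul_tan_one_fifth_le_one]

end Poincare

/-! ### The finite guides -/

section Guide

open Prod

variable {R : ℝ}

theorem Box_eq (L : ℝ) : Box L = Ioo (-L - 1) (L - 1) ×ˢ Ioo (-L - 1) (L - 1) := by
  ext p
  simp only [Box, mem_ofPred_eq, abs_lt, mem_prod, mem_Ioo, lt_sub_iff_add_lt,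
    sub_lt_iff_lt_add]

theorem isOpen_Box (L : ℝ) : IsOpen (Box L) := by
  rw [Box_eq]
  exact isOpen_Ioo.prod isOpen_Ioo

theorem isOpenMap_min : IsOpenMap fun p : ℝ × ℝ => min p.1 p.2 := by
  refine IsOpenMap.of_sections fun p =>
    ⟨fun s => (p.1 + (s - min p.1 p.2), p.2 + (s - min p.1 p.2)), by fun_prop, by simp, fun s => ?_⟩
  simp only [min_add_add_right]
  ring

theorem frontier_Gam : frontier Gam = {p | min p.1 p.2 = -1 ∨ min p.1 p.2 = 0} := by
  have hGam : Gam = (fun p : ℝ × ℝ => min p.1 p.2) ⁻¹' Ioo (-1) 0 := rfl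
  rw [hGam, ← isOpenMap_min.preimage_frontier_eq_frontier_preimage (by fun_prop),
    frontier_Ioo (by norm_num)]
  rfl

theorem DirB_eq (R : ℝ) : DirB R = frontier Gam ∩ Box (R + 1) := by
  have hsub : frontier (GamR R) ⊆ Box (R + 1) ∪ frontier (Box (R + 1)) := by
    rw [← closure_eq_self_union_frontier]
    exact frontier_subset_closure.trans (closure_mono inter_subset_right)
  rw [← frontier_inter_open_inter (isOpen_Box _), DirB, Sig, sdiff_self_inter]
  ext p
  refine ⟨fun h => ⟨h.1, (hsub h.1).resolve_right h.2⟩, fun h => ⟨h.1, ?_⟩⟩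
  rw [(isOpen_Box _).frontier_eq]
  exact fun hp => hp.2 h.2

theorem mem_DirB_iff {p : ℝ × ℝ} :
    p ∈ DirB R ↔ (min p.1 p.2 = -1 ∨ min p.1 p.2 = 0) ∧ p ∈ Box (R + 1) := by
  rw [DirB_eq, frontier_Gam]
  rfl

theorem mem_GamR_iff {p : ℝ × ℝ} :
    p ∈ GamR R ↔ p ∈ Ioo (-1) R ×ˢ Ioo (-1) R ∧ (p.1 < 0 ∨ p.2 < 0) := by
  simp only [GamR, Gam, Box_eq, mem_inter_iff, mem_ofPred_eq, lt_min_iff, min_lt_iff, mem_prod,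
    mem_Ioo, add_sub_cancel_right]
  constructor
  · tauto
  · rintro ⟨⟨⟨h₁, h₂⟩, h₃, h₄⟩, h⟩
    exact ⟨⟨⟨h₁, h₃⟩, h⟩, ⟨by linarith, h₂⟩, by linarith, h₄⟩

theorem DirB_mono : Monotone DirB := by
  intro R R' h
  rw [DirB_eq, DirB_eq, Box_eq, Box_eq]
  refine inter_subset_inter_right _ (prod_mono ?_ ?_) <;>
    exact Ioo_subset_Ioo (by linarith) (by linarith)

theorem GamR_eq_of_nonpos (h : R ≤ 0) : GamR R = Ioo (-1) R ×ˢ Ioo (-1) R := by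
  ext p
  rw [mem_GamR_iff]
  exact and_iff_left_of_imp fun hp => Or.inl (hp.1.2.trans_le h)

theorem GamR_subset (R : ℝ) : GamR R ⊆ Ioo (-1) R ×ˢ Ioo (-1) R := fun _ hp => (mem_GamR_iff.1 hp).1

theorem preimage_swap_GamR (R : ℝ) : swap ⁻¹' GamR R = GamR R := by
  ext p
  simp only [mem_preimage, mem_GamR_iff, mem_prod, fst_swap, snd_swap]
  tauto

theorem swap_mem_DirB_iff {p : ℝ × ℝ} : p.swap ∈ DirB R ↔ p ∈ DirB R := by
  simp only [mem_DirB_iff, fst_swap, snd_swap, min_comm p.2, Box, mem_ofPred_eq]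
  tauto

theorem AdmR.comp_swap {u : ℝ × ℝ → ℝ} (hu : AdmR R u) : AdmR R (u ∘ swap) :=
  ⟨hu.1.comp (contDiff_snd.prodMk contDiff_fst), fun _ hp => hu.2 _ (swap_mem_DirB_iff.2 hp)⟩

theorem AdmR.mono {R' : ℝ} (h : R ≤ R') {u : ℝ × ℝ → ℝ} (hu : AdmR R' u) : AdmR R u :=
  ⟨hu.1, fun p hp => hu.2 p (DirB_mono h hp)⟩

theorem AdmR.apply_neg_one_left {u : ℝ × ℝ → ℝ} (hu : AdmR R u) {y : ℝ} (h₁ : -1 ≤ y)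
    (h₂ : y < R) : u (-1, y) = 0 := by
  refine hu.2 _ (mem_DirB_iff.2 ⟨Or.inl (min_eq_left h₁), ?_⟩)
  simp only [Box_eq, mem_prod, mem_Ioo]
  refine ⟨⟨?_, ?_⟩, ?_, ?_⟩ <;> linarith

theorem AdmR.apply_zero_left {u : ℝ × ℝ → ℝ} (hu : AdmR R u) {y : ℝ} (h₁ : 0 ≤ y) (h₂ : y < R) :
    u (0, y) = 0 := by
  refine hu.2 _ (mem_DirB_iff.2 ⟨Or.inr (min_eq_left h₁), ?_⟩)
  simp only [Box_eq, mem_prod, mem_Ioo]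
  refine ⟨⟨?_, ?_⟩, ?_, ?_⟩ <;> linarith

end Guide

/-! ### Integration over rectangles and guides -/

section Integration

open Prod

variable {a b c d : ℝ} {f g : ℝ × ℝ → ℝ}

theorem integrableOn_Ioo_prod_Ioo (hf : Continuous f) : IntegrableOn f (Ioo a b ×ˢ Ioo c d) :=
  (hf.continuousOn.integrableOn_compact (isCompact_Icc.prod isCompact_Icc)).mono_set
    (prod_mono Ioo_subset_Icc_self Ioo_subset_Icc_self)

theorem integrableOn_GamR (hf : Continuous f) (R : ℝ) : IntegrableOn f (GamR R) :=
  (integrableOn_Ioo_prod_Ioo hf).mono_set (GamR_subset R)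

theorem continuous_integral_fst (hf : Continuous f) (a b : ℝ) :
    Continuous fun y => ∫ x in a..b, f (x, y) :=
  intervalIntegral.continuous_parametric_intervalIntegral_of_continuous'
    (f := fun y x => f (x, y)) (by fun_prop) a b

theorem integral_Ioo_prod_Ioo (hab : a ≤ b) (hcd : c ≤ d) (hf : Continuous f) :
    ∫ p in Ioo a b ×ˢ Ioo c d, f p = ∫ y in c..d, ∫ x in a..b, f (x, y) := by
  rw [Measure.volume_eq_prod, ← setIntegral_prod_swap, setIntegral_prod _ (by
    rw [← Measure.volume_eq_prod]
    exact integrableOn_Ioo_prod_Ioo (hf.comp continuous_swap))]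
  simp only [intervalIntegral.integral_of_le hab, intervalIntegral.integral_of_le hcd,
    integral_Ioc_eq_integral_Ioo]
  rfl

theorem integral_Ioo_prod_Ioo_mul (hab : a ≤ b) (hcd : c ≤ d) (f g : ℝ → ℝ) :
    ∫ p in Ioo a b ×ˢ Ioo c d, f p.1 * g p.2 = (∫ x in a..b, f x) * ∫ y in c..d, g y := by
  rw [Measure.volume_eq_prod, setIntegral_prod_mul, intervalIntegral.integral_of_le hab,
    intervalIntegral.integral_of_le hcd, integral_Ioc_eq_integral_Ioo,
    integral_Ioc_eq_integral_Ioo]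

theorem setIntegral_comp_swap (f : ℝ × ℝ → ℝ) (s : Set (ℝ × ℝ)) :
    ∫ p in swap ⁻¹' s, f p.swap = ∫ p in s, f p :=
  Measure.measurePreserving_swap.setIntegral_preimage_emb
    MeasurableEquiv.prodComm.measurableEmbedding f s

theorem integral_GamR_comp_swap (f : ℝ × ℝ → ℝ) (R : ℝ) :
    ∫ p in GamR R, f p.swap = ∫ p in GamR R, f p := by
  simpa only [preimage_swap_GamR] using setIntegral_comp_swap f (GamR R)

theorem integral_GamR_eq_integral_Ioo_prod_Ioo {R : ℝ}
    (hf : ∀ p ∈ Ico 0 R ×ˢ Ico 0 R, f p = 0) :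
    ∫ p in GamR R, f p = ∫ p in Ioo (-1) R ×ˢ Ioo (-1) R, f p := by
  refine (setIntegral_eq_of_subset_of_forall_sdiff_eq_zero
    (measurableSet_Ioo.prod measurableSet_Ioo) (GamR_subset R) fun p hp => ?_).symm
  have hquadrant : ¬(p.1 < 0 ∨ p.2 < 0) := fun h => hp.2 (mem_GamR_iff.2 ⟨hp.1, h⟩)
  push Not at hquadrant
  exact hf p ⟨⟨hquadrant.1, hp.1.1.2⟩, hquadrant.2, hp.1.2.2⟩

/-- The part of the upper arm of the guide `Γ` from height `R` to height `R'`, for `0 ≤ R`. -/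
def upperArm (R R' : ℝ) : Set (ℝ × ℝ) := Ioo (-1) 0 ×ˢ Ico R R'

theorem setIntegral_upperArm (f : ℝ × ℝ → ℝ) (R R' : ℝ) :
    ∫ p in upperArm R R', f p = ∫ p in Ioo (-1) 0 ×ˢ Ioo R R', f p :=
  setIntegral_congr_set (Measure.set_prod_ae_eq (Filter.EventuallyEq.refl _ _) Ioo_ae_eq_Ico.symm)

theorem measurableSet_upperArm (R R' : ℝ) : MeasurableSet (upperArm R R') :=
  measurableSet_Ioo.prod measurableSet_Ico

theorem integrableOn_upperArm (hf : Continuous f) (R R' : ℝ) : IntegrableOn f (upperArm R R') :=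
  (hf.continuousOn.integrableOn_compact (isCompact_Icc.prod isCompact_Icc)).mono_set
    (prod_mono Ioo_subset_Icc_self Ico_subset_Icc_self)

theorem GamR_eq_union_upperArm {R R' : ℝ} (hR : 0 ≤ R) (hRR' : R ≤ R') :
    GamR R' = GamR R ∪ (upperArm R R' ∪ swap ⁻¹' upperArm R R') := by
  ext ⟨x, y⟩
  simp only [upperArm, mem_union, mem_GamR_iff, mem_preimage, mem_prod, mem_Ioo, mem_Ico,
    swap_prod_mk]
  grind

theorem disjoint_GamR_upperArm (R R' : ℝ) :
    Disjoint (GamR R) (upperArm R R' ∪ swap ⁻¹' upperArm R R') := by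
  refine disjoint_left.2 fun p hp => ?_
  obtain ⟨⟨hx, hy⟩, -⟩ := mem_GamR_iff.1 hp
  rintro (h | h)
  · exact h.2.1.not_gt hy.2
  · exact h.2.1.not_gt hx.2

theorem disjoint_upperArm_swap {R : ℝ} (hR : 0 ≤ R) (R' : ℝ) :
    Disjoint (upperArm R R') (swap ⁻¹' upperArm R R') :=
  disjoint_left.2 fun _ hp hp' => (hR.trans hp.2.1).not_gt hp'.1.2

theorem integral_GamR_eq_add {R R' : ℝ} (hR : 0 ≤ R) (hRR' : R ≤ R') (hf : Continuous f) :
    ∫ p in GamR R', f p = (∫ p in GamR R, f p) +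
      ((∫ p in upperArm R R', f p) + ∫ p in upperArm R R', f p.swap) := by
  have hswap : MeasurableSet (swap ⁻¹' upperArm R R') :=
    measurable_swap (measurableSet_upperArm R R')
  have hint : IntegrableOn f (swap ⁻¹' upperArm R R') :=
    (Measure.measurePreserving_swap.integrableOn_comp_preimage
      MeasurableEquiv.prodComm.measurableEmbedding).1
      (integrableOn_upperArm (hf.comp continuous_swap) R R')
  have harm := integrableOn_upperArm hf R R'
  rw [GamR_eq_union_upperArm hR hRR', setIntegral_union (disjoint_GamR_upperArm R R')
    ((measurableSet_upperArm R R').union hswap) (integrableOn_GamR hf R) (harm.union hint),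
    setIntegral_union (disjoint_upperArm_swap hR R') hswap harm hint,
    ← setIntegral_comp_swap (fun p => f p.swap)]
  simp only [swap_swap]

end Integration

/-! ### The Rayleigh quotient of the finite guides -/

section Rayleigh

open Prod

variable {R : ℝ} {u : ℝ × ℝ → ℝ}

/-- The horizontal part `(∂₁u)²` of the Dirichlet energy density of `u`; the vertical part is
recovered by reflecting `u` in the diagonal. -/
def dxSq (u : ℝ × ℝ → ℝ) (p : ℝ × ℝ) : ℝ := (fderiv ℝ u p (1, 0)) ^ 2

theorem continuous_dxSq (hu : ContDiff ℝ 1 u) : Continuous (dxSq u) := by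
  have := hu.continuous_fderiv one_ne_zero
  unfold dxSq
  fun_prop

theorem dxSq_apply (hu : ContDiff ℝ 1 u) (x y : ℝ) :
    dxSq u (x, y) = deriv (fun s => u (s, y)) x ^ 2 := by
  have hpath : HasDerivAt (fun s : ℝ => (s, y)) ((1 : ℝ), (0 : ℝ)) x :=
    (hasDerivAt_id x).prodMk (hasDerivAt_const x y)
  have hslice : HasDerivAt (fun s => u (s, y)) (fderiv ℝ u (x, y) (1, 0)) x :=
    (hu.differentiable one_ne_zero _).hasFDerivAt.comp_hasDerivAt x hpath
  rw [dxSq, hslice.deriv]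

theorem gradSq2_eq_dxSq_add (u : ℝ × ℝ → ℝ) (p : ℝ × ℝ) :
    gradSq2 u p = dxSq u p + dxSq (u ∘ swap) p.swap := by
  have hswap : fderiv ℝ (u ∘ swap) p.swap (1, 0) = fderiv ℝ u p (0, 1) := by
    have hcomp := (ContinuousLinearEquiv.prodComm ℝ ℝ ℝ).comp_right_fderiv (f := u) (x := p.swap)
    exact congrArg (fun T : ℝ × ℝ →L[ℝ] ℝ => T (1, 0)) hcomp
  rw [gradSq2, dxSq, dxSq, hswap]

theorem dxSq_le_gradSq2 (u : ℝ × ℝ → ℝ) (p : ℝ × ℝ) : dxSq u p ≤ gradSq2 u p :=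
  le_add_of_nonneg_right (sq_nonneg _)

theorem gradSq2_swap (u : ℝ × ℝ → ℝ) (p : ℝ × ℝ) : gradSq2 u p.swap = gradSq2 (u ∘ swap) p := by
  rw [gradSq2_eq_dxSq_add, gradSq2_eq_dxSq_add, add_comm]
  rfl

theorem continuous_gradSq2 (hu : ContDiff ℝ 1 u) : Continuous (gradSq2 u) := by
  have := hu.continuous_fderiv one_ne_zero
  unfold gradSq2
  fun_prop

theorem integral_gradSq2 (hu : AdmR R u) :
    ∫ p in GamR R, gradSq2 u p =
      (∫ p in GamR R, dxSq u p) + ∫ p in GamR R, dxSq (u ∘ swap) p := by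
  have hcont := continuous_dxSq hu.1
  have hcont' := continuous_dxSq hu.comp_swap.1
  simp only [gradSq2_eq_dxSq_add]
  rw [← integral_GamR_comp_swap (dxSq (u ∘ swap))]
  exact integral_add (integrableOn_GamR hcont R)
    (integrableOn_GamR (hcont'.comp continuous_swap) R)

theorem lamR_mul_integral_sq_le (hu : AdmR R u) :
    lamR R * (∫ p in GamR R, u p ^ 2) ≤ ∫ p in GamR R, gradSq2 u p := by
  have henergy : ∀ v : ℝ × ℝ → ℝ, 0 ≤ ∫ p in GamR R, gradSq2 v p := fun v =>
    integral_nonneg fun p => add_nonneg (sq_nonneg _) (sq_nonneg _)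
  have hmass : ∀ v : ℝ × ℝ → ℝ, 0 ≤ ∫ p in GamR R, v p ^ 2 := fun v =>
    integral_nonneg fun p => sq_nonneg _
  rcases (hmass u).eq_or_lt with h | h
  · rw [← h, mul_zero]
    exact henergy u
  · rw [← le_div_iff₀ h]
    refine csInf_le ⟨0, ?_⟩ ⟨u, hu, h.ne', rfl⟩
    rintro _ ⟨v, -, -, rfl⟩
    exact div_nonneg (henergy v) (hmass v)

theorem lamR_le {m : ℝ} (hu : AdmR R u) (hpos : 0 < ∫ p in GamR R, u p ^ 2)
    (h : ∫ p in GamR R, gradSq2 u p ≤ m * ∫ p in GamR R, u p ^ 2) : lamR R ≤ m :=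
  le_of_mul_le_mul_right ((lamR_mul_integral_sq_le hu).trans h) hpos

theorem le_lamR {m : ℝ} (hu : ∃ u, AdmR R u ∧ 0 < ∫ p in GamR R, u p ^ 2)
    (h : ∀ v, AdmR R v → m * (∫ p in GamR R, v p ^ 2) ≤ ∫ p in GamR R, gradSq2 v p) :
    m ≤ lamR R := by
  obtain ⟨u, hu, hpos⟩ := hu
  refine le_csInf ⟨_, u, hu, hpos.ne', rfl⟩ ?_
  rintro _ ⟨v, hv, hne, rfl⟩
  rw [le_div_iff₀ ((integral_nonneg fun p => sq_nonneg _).lt_of_ne' hne)]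
  exact h v hv

end Rayleigh

/-! ### Symmetric products as test functions -/

section SymProd

variable {a t : ℝ → ℝ} {R : ℝ}

/-- The symmetric product `(x, y) ↦ a(x) t(y) + a(y) t(x)` of two profiles. -/
def symProd (a t : ℝ → ℝ) (p : ℝ × ℝ) : ℝ := a p.1 * t p.2 + a p.2 * t p.1

theorem contDiff_symProd (ha : ContDiff ℝ 1 a) (ht : ContDiff ℝ 1 t) :
    ContDiff ℝ 1 (symProd a t) := by
  unfold symProd
  fun_prop

theorem symProd_comp_swap (a t : ℝ → ℝ) : symProd a t ∘ Prod.swap = symProd a t :=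
  funext fun _ => add_comm _ _

theorem dxSq_symProd (ha : ContDiff ℝ 1 a) (ht : ContDiff ℝ 1 t) (p : ℝ × ℝ) :
    dxSq (symProd a t) p = (deriv a p.1 * t p.2 + a p.2 * deriv t p.1) ^ 2 := by
  have hslice : HasDerivAt (fun s => symProd a t (s, p.2))
      (deriv a p.1 * t p.2 + a p.2 * deriv t p.1) p.1 :=
    ((ha.differentiable one_ne_zero p.1).hasDerivAt.mul_const (t p.2)).add
      ((ht.differentiable one_ne_zero p.1).hasDerivAt.const_mul (a p.2))
  exact (dxSq_apply (contDiff_symProd ha ht) p.1 p.2).trans (by rw [hslice.deriv])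

theorem integral_sq_mul_add_mul {l r : ℝ} (hlr : l ≤ r) {f₁ f₂ g₁ g₂ : ℝ → ℝ} (hf₁ : Continuous f₁)
    (hf₂ : Continuous f₂) (hg₁ : Continuous g₁) (hg₂ : Continuous g₂) :
    ∫ p in Ioo l r ×ˢ Ioo l r, (f₁ p.1 * g₁ p.2 + g₂ p.2 * f₂ p.1) ^ 2 =
      (∫ x in l..r, f₁ x ^ 2) * (∫ x in l..r, g₁ x ^ 2)
        + (∫ x in l..r, f₂ x ^ 2) * (∫ x in l..r, g₂ x ^ 2)
        + 2 * ((∫ x in l..r, f₁ x * f₂ x) * ∫ x in l..r, g₂ x * g₁ x) := by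
  have hexpand : ∀ p : ℝ × ℝ, (f₁ p.1 * g₁ p.2 + g₂ p.2 * f₂ p.1) ^ 2 = f₁ p.1 ^ 2 * g₁ p.2 ^ 2
      + f₂ p.1 ^ 2 * g₂ p.2 ^ 2 + 2 * (f₁ p.1 * f₂ p.1 * (g₂ p.2 * g₁ p.2)) := fun p => by ring
  simp only [hexpand]
  rw [integral_add (integrableOn_Ioo_prod_Ioo (by fun_prop))
      (integrableOn_Ioo_prod_Ioo (by fun_prop)),
    integral_add (integrableOn_Ioo_prod_Ioo (by fun_prop))
      (integrableOn_Ioo_prod_Ioo (by fun_prop)),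
    integral_const_mul]
  rw [integral_Ioo_prod_Ioo_mul hlr hlr (fun x => f₁ x ^ 2) fun y => g₁ y ^ 2,
    integral_Ioo_prod_Ioo_mul hlr hlr (fun x => f₂ x ^ 2) fun y => g₂ y ^ 2,
    integral_Ioo_prod_Ioo_mul hlr hlr (fun x => f₁ x * f₂ x) fun y => g₂ y * g₁ y]

/-- A pair of profiles whose symmetric product is an admissible test function on `Γ_R`: the
product vanishes on the outer edges, and on the quadrant which is cut out of the box. -/
structure IsProfilePair (R : ℝ) (a t : ℝ → ℝ) : Prop where
  contDiff_left : ContDiff ℝ 1 a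
  contDiff_right : ContDiff ℝ 1 t
  left_neg_one : a (-1) = 0
  right_neg_one : t (-1) = 0
  right_eq_zero : ∀ x ∈ Ico 0 R, t x = 0

namespace IsProfilePair

theorem deriv_right_eq_zero (h : IsProfilePair R a t) {x : ℝ} (hx : x ∈ Ico 0 R) :
    deriv t x = 0 := by
  rw [← (h.contDiff_right.differentiable one_ne_zero x).derivWithin (uniqueDiffOn_Ico 0 R x hx),
    derivWithin_congr h.right_eq_zero (h.right_eq_zero x hx), derivWithin_fun_const]
  rfl

theorem admR (h : IsProfilePair R a t) : AdmR R (symProd a t) := by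
  refine ⟨contDiff_symProd h.contDiff_left h.contDiff_right, fun p hp => ?_⟩
  obtain ⟨hmin | hmin, hbox⟩ := mem_DirB_iff.1 hp
  · rcases min_choice p.1 p.2 with hp | hp <;> rw [hmin] at hp <;>
      simp [symProd, ← hp, h.left_neg_one, h.right_neg_one]
  · rw [Box_eq, add_sub_cancel_right] at hbox
    have hx : p.1 ∈ Ico 0 R := ⟨hmin ▸ min_le_left _ _, hbox.1.2⟩
    have hy : p.2 ∈ Ico 0 R := ⟨hmin ▸ min_le_right _ _, hbox.2.2⟩
    simp [symProd, h.right_eq_zero _ hx, h.right_eq_zero _ hy]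

theorem integral_sq (h : IsProfilePair R a t) (hR : -1 ≤ R) :
    ∫ p in GamR R, symProd a t p ^ 2 = 2 * ((∫ x in (-1)..R, a x ^ 2) * (∫ x in (-1)..R, t x ^ 2)
      + (∫ x in (-1)..R, a x * t x) ^ 2) := by
  have ha := h.contDiff_left.continuous
  have ht := h.contDiff_right.continuous
  rw [integral_GamR_eq_integral_Ioo_prod_Ioo fun p hp => by
    simp [symProd, h.right_eq_zero _ hp.1, h.right_eq_zero _ hp.2]]
  refine (integral_sq_mul_add_mul hR ha ht ht ha).trans ?_
  ring

theorem integral_gradSq2 (h : IsProfilePair R a t) (hR : -1 ≤ R) :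
    ∫ p in GamR R, gradSq2 (symProd a t) p =
      2 * ((∫ x in (-1)..R, deriv a x ^ 2) * (∫ x in (-1)..R, t x ^ 2)
        + (∫ x in (-1)..R, deriv t x ^ 2) * (∫ x in (-1)..R, a x ^ 2)
        + 2 * ((∫ x in (-1)..R, deriv a x * deriv t x) * ∫ x in (-1)..R, a x * t x)) := by
  have ha := h.contDiff_left
  have ht := h.contDiff_right
  rw [_root_.integral_gradSq2 h.admR, symProd_comp_swap, ← two_mul]
  simp only [dxSq_symProd ha ht]
  rw [integral_GamR_eq_integral_Ioo_prod_Ioo fun p hp => by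
      simp [h.right_eq_zero _ hp.2, h.deriv_right_eq_zero hp.1],
    integral_sq_mul_add_mul hR ha.continuous_deriv_one ht.continuous_deriv_one ht.continuous
      ha.continuous]

end IsProfilePair

end SymProd

/-! ### The square -/

section Square

theorem integral_deriv_mul_deriv_eq {a b κ : ℝ} {v w : ℝ → ℝ} (hv : Continuous v)
    (hv' : ∀ x, HasDerivAt (deriv v) (-κ * v x) x) (hw : ContDiff ℝ 1 w)
    (h : deriv v b * w b = deriv v a * w a) :
    ∫ x in a..b, deriv v x * deriv w x = κ * ∫ x in a..b, v x * w x := by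
  have hparts := intervalIntegral.integral_mul_deriv_eq_deriv_mul (a := a) (b := b)
    (fun x _ => hv' x) (fun x _ => (hw.differentiable one_ne_zero x).hasDerivAt)
    ((hv.const_mul _).intervalIntegrable _ _) (hw.continuous_deriv_one.intervalIntegrable _ _)
  rw [hparts, h, sub_self, zero_sub, ← intervalIntegral.integral_neg,
    ← intervalIntegral.integral_const_mul]
  exact intervalIntegral.integral_congr fun x _ => by ring

theorem mul_integral_sq_le_integral_dxSq {a b c d K : ℝ} (hab : a ≤ b) (hcd : c ≤ d)
    {u : ℝ × ℝ → ℝ} (hu : ContDiff ℝ 1 u)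
    (h : ∀ y ∈ Ioo c d, K * ∫ x in a..b, u (x, y) ^ 2 ≤
      ∫ x in a..b, deriv (fun s => u (s, y)) x ^ 2) :
    K * ∫ p in Ioo a b ×ˢ Ioo c d, u p ^ 2 ≤ ∫ p in Ioo a b ×ˢ Ioo c d, dxSq u p := by
  have hmass : Continuous fun p => u p ^ 2 := hu.continuous.pow 2
  have henergy := continuous_dxSq hu
  rw [integral_Ioo_prod_Ioo hab hcd hmass, integral_Ioo_prod_Ioo hab hcd henergy,
    ← intervalIntegral.integral_const_mul]
  refine intervalIntegral.integral_mono_on_of_le_Ioo hcd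
    (((continuous_integral_fst hmass a b).const_mul K).intervalIntegrable _ _)
    ((continuous_integral_fst henergy a b).intervalIntegrable _ _) fun y hy => ?_
  simpa only [dxSq_apply hu] using h y hy

theorem contDiff_slice {u : ℝ × ℝ → ℝ} (hu : ContDiff ℝ 1 u) (y : ℝ) :
    ContDiff ℝ 1 fun s => u (s, y) :=
  hu.comp (contDiff_id.prodMk contDiff_const)

variable {R : ℝ}

theorem mul_integral_sq_le_integral_gradSq2 (hR : -1 < R) (hR0 : R ≤ 0) {u : ℝ × ℝ → ℝ}
    (hu : AdmR R u) :
    π ^ 2 / (2 * (1 + R) ^ 2) * ∫ p in GamR R, u p ^ 2 ≤ ∫ p in GamR R, gradSq2 u p := by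
  have hdx : ∀ v, AdmR R v →
      (π / (2 * (R - -1))) ^ 2 * ∫ p in GamR R, v p ^ 2 ≤ ∫ p in GamR R, dxSq v p := by
    intro v hv
    rw [GamR_eq_of_nonpos hR0]
    exact mul_integral_sq_le_integral_dxSq hR.le hR.le hv.1 fun y hy =>
      sq_mul_integral_sq_le_of_left_eq_zero hR (contDiff_slice hv.1 y)
        (hv.apply_neg_one_left hy.1.le hy.2)
  have hconst : π ^ 2 / (2 * (1 + R) ^ 2) = 2 * (π / (2 * (R - -1))) ^ 2 := by
    have : 1 + R ≠ 0 := by linarith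
    rw [sub_neg_eq_add, add_comm R]
    field_simp
  have hmass := integral_GamR_comp_swap (fun p => u p ^ 2) R
  have hdy := hdx _ hu.comp_swap
  simp only [Function.comp_apply, hmass] at hdy
  rw [hconst, integral_gradSq2 hu]
  linarith [hdx u hu]

theorem exists_admR_integral_gradSq2_le_of_nonpos (hR : -1 < R) (hR0 : R ≤ 0) :
    ∃ u, AdmR R u ∧ 0 < ∫ p in GamR R, u p ^ 2 ∧
      ∫ p in GamR R, gradSq2 u p ≤ π ^ 2 / (2 * (1 + R) ^ 2) * ∫ p in GamR R, u p ^ 2 := by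
  have hR1 : 0 < 1 + R := by linarith
  set k : ℝ := π / (2 * (1 + R))
  have hk : 0 < k := by positivity
  have hkR : k * (R + 1) = π / 2 := by
    simp only [k]
    field_simp
    ring
  set s : ℝ → ℝ := fun x => sin (k * (x + 1))
  have hlin : ∀ x, HasDerivAt (fun x : ℝ => k * (x + 1)) k x := fun x => by
    simpa using ((hasDerivAt_id x).add_const 1).const_mul k
  have hs : ContDiff ℝ 1 s := by fun_prop
  have hds : deriv s = fun x => cos (k * (x + 1)) * k := funext fun x => (hlin x).sin.deriv
  have hpair : IsProfilePair R s s :=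
    ⟨hs, hs, by simp [s], by simp [s], by simp [Ico_eq_empty, hR0]⟩
  have henergy : ∫ x in (-1)..R, deriv s x ^ 2 = k ^ 2 * ∫ x in (-1)..R, s x ^ 2 := by
    simp only [sq (deriv s _), sq (s _)]
    refine integral_deriv_mul_deriv_eq hs.continuous (fun x => ?_) hs (by simp [s, hkR])
    rw [hds]
    exact ((hlin x).cos.mul_const k).congr_deriv (by ring)
  have hmass : 0 < ∫ x in (-1)..R, s x ^ 2 := by
    refine intervalIntegral.intervalIntegral_pos_of_pos_on
      ((hs.continuous.pow 2).intervalIntegrable _ _) (fun x hx => ?_) hR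
    have : 0 < s x := sin_pos_of_pos_of_lt_pi (mul_pos hk (by linarith [hx.1]))
      (by nlinarith [hx.2, pi_pos])
    positivity
  refine ⟨symProd s s, hpair.admR, ?_, le_of_eq ?_⟩
  · rw [hpair.integral_sq hR.le]
    positivity
  · rw [hpair.integral_gradSq2 hR.le, hpair.integral_sq hR.le]
    simp only [← sq, henergy, k]
    field_simp
    ring

theorem lamR_eq_of_nonpos (hR : -1 < R) (hR0 : R ≤ 0) : lamR R = π ^ 2 / (2 * (1 + R) ^ 2) := by
  obtain ⟨u, hu, hpos, hle⟩ := exists_admR_integral_gradSq2_le_of_nonpos hR hR0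
  exact (lamR_le hu hpos hle).antisymm
    (le_lamR ⟨u, hu, hpos⟩ fun _ hv => mul_integral_sq_le_integral_gradSq2 hR hR0 hv)

end Square

/-! ### Test functions on the guides -/

section TestFunction

theorem hasDerivAt_comp_min_zero {g g' : ℝ → ℝ} (hg : ∀ x, HasDerivAt g (g' x) x) (h0 : g' 0 = 0)
    (x : ℝ) : HasDerivAt (fun x => g (min x 0)) (g' (min x 0)) x := by
  rcases lt_trichotomy x 0 with h | rfl | h
  · rw [min_eq_left h.le]
    refine (hg x).congr_of_eventuallyEq ?_
    filter_upwards [Iio_mem_nhds h] with y hy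
    rw [min_eq_left (le_of_lt hy)]
  · rw [min_self, h0, ← hasDerivWithinAt_univ, ← Iic_union_Ici (a := (0 : ℝ))]
    refine HasDerivWithinAt.union (((h0 ▸ hg 0).hasDerivWithinAt).congr
      (fun y hy => by rw [min_eq_left hy]) (by simp)) ?_
    exact (hasDerivWithinAt_const _ _ (g 0)).congr (fun y hy => by rw [min_eq_right hy]) (by simp)
  · rw [min_eq_right h.le, h0]
    refine (hasDerivAt_const x (g 0)).congr_of_eventuallyEq ?_
    filter_upwards [Ioi_mem_nhds h] with y hy
    rw [min_eq_right (le_of_lt hy)]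

theorem contDiff_one_of_hasDerivAt {f f' : ℝ → ℝ} (hf : ∀ x, HasDerivAt f (f' x) x)
    (hf' : Continuous f') : ContDiff ℝ 1 f :=
  contDiff_one_iff_deriv.2 ⟨fun x => (hf x).differentiableAt,
    (funext fun x => (hf x).deriv : deriv f = f') ▸ hf'⟩

theorem integral_comp_min_zero {R : ℝ} (hR : 0 ≤ R) {f : ℝ → ℝ} (hf : Continuous f)
    (h0 : f 0 = 0) : ∫ x in (-1)..R, f (min x 0) = ∫ x in (-1)..0, f x := by
  have hcont : Continuous fun x : ℝ => f (min x 0) := by fun_prop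
  have hcorner : ∫ x in (-1)..0, f (min x 0) = ∫ x in (-1)..0, f x :=
    intervalIntegral.integral_congr fun x hx => by
      rw [uIcc_of_le (by norm_num)] at hx
      simp only [min_eq_left hx.2]
  have harm : ∫ x in 0..R, f (min x 0) = 0 :=
    intervalIntegral.integral_zero_ae <| .of_forall fun x hx => by
      rw [uIoc_of_le hR] at hx
      rw [min_eq_right hx.1.le, h0]
  rw [← intervalIntegral.integral_add_adjacent_intervals (b := 0)
    (hcont.intervalIntegrable _ _) (hcont.intervalIntegrable _ _), hcorner, harm, add_zero]

/-- A `C¹` regularisation of `|s|` which vanishes to second order at `0`. It is needed because a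
`C¹` function vanishing on both inner edges of `Γ` has zero gradient at the reentrant corner. -/
def softAbs (ε s : ℝ) : ℝ := √(s ^ 2 + ε ^ 2) - ε

variable {ε : ℝ}

theorem softAbs_zero (hε : 0 ≤ ε) : softAbs ε 0 = 0 := by
  simp [softAbs, sqrt_sq hε]

theorem softAbs_nonneg (ε s : ℝ) : 0 ≤ softAbs ε s :=
  sub_nonneg.2 (le_sqrt_of_sq_le (by nlinarith [sq_nonneg s]))

theorem softAbs_le_abs (hε : 0 ≤ ε) (s : ℝ) : softAbs ε s ≤ |s| := by
  rw [softAbs, sub_le_iff_le_add, sqrt_le_left (by positivity)]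
  nlinarith [sq_abs s, mul_nonneg (abs_nonneg s) hε]

theorem abs_sub_le_softAbs (ε s : ℝ) : |s| - ε ≤ softAbs ε s :=
  sub_le_sub_right (le_sqrt_of_sq_le (by nlinarith [sq_abs s, sq_nonneg ε])) ε

theorem continuous_softAbs (ε : ℝ) : Continuous (softAbs ε) := by
  unfold softAbs
  fun_prop

theorem hasDerivAt_softAbs (hε : 0 < ε) (s : ℝ) :
    HasDerivAt (softAbs ε) (s / √(s ^ 2 + ε ^ 2)) s := by
  have hrad : s ^ 2 + ε ^ 2 ≠ 0 := by positivity
  refine ((((hasDerivAt_pow 2 s).add_const (ε ^ 2)).sqrt hrad).sub_const ε).congr_deriv ?_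
  simp [mul_div_mul_left]

theorem continuous_div_sqrt (hε : 0 < ε) : Continuous fun s => s / √(s ^ 2 + ε ^ 2) :=
  continuous_id.div (by fun_prop) fun s => by positivity

theorem div_sqrt_sq_le_one (ε s : ℝ) : (s / √(s ^ 2 + ε ^ 2)) ^ 2 ≤ 1 := by
  rw [div_pow, sq_sqrt (by positivity)]
  exact div_le_one_of_le₀ (by nlinarith [sq_nonneg ε]) (by positivity)

/-- The longitudinal profile of the test function, constant along the arms. -/
def longProfile (x : ℝ) : ℝ := cos (π / 2 * min x 0)

/-- The transverse profile of the test function: a regularisation of the transverse ground state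
`|sin (π x)|` of the arms. -/
def transProfile (ε x : ℝ) : ℝ := softAbs ε (sin (π * min x 0))

/-- The derivative of `fun x => softAbs ε (sin (π * x))`. -/
def derivSoftSin (ε x : ℝ) : ℝ :=
  sin (π * x) / √(sin (π * x) ^ 2 + ε ^ 2) * (cos (π * x) * π)

theorem hasDerivAt_softAbs_sin (hε : 0 < ε) (x : ℝ) :
    HasDerivAt (fun x => softAbs ε (sin (π * x))) (derivSoftSin ε x) x :=
  (hasDerivAt_softAbs hε _).comp x (by simpa using ((hasDerivAt_id x).const_mul π).sin)

theorem continuous_derivSoftSin (hε : 0 < ε) : Continuous (derivSoftSin ε) := by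
  unfold derivSoftSin
  exact ((continuous_div_sqrt hε).comp (by fun_prop : Continuous fun x => sin (π * x))).mul
    (by fun_prop)

theorem derivSoftSin_zero (ε : ℝ) : derivSoftSin ε 0 = 0 := by
  simp [derivSoftSin]

theorem hasDerivAt_cos_mul (c x : ℝ) :
    HasDerivAt (fun x => cos (c * x)) (-(c * sin (c * x))) x := by
  simpa [mul_comm] using ((hasDerivAt_id x).const_mul c).cos

theorem hasDerivAt_longProfile (x : ℝ) :
    HasDerivAt longProfile (-(π / 2 * sin (π / 2 * min x 0))) x :=
  hasDerivAt_comp_min_zero (g' := fun x => -(π / 2 * sin (π / 2 * x))) (hasDerivAt_cos_mul _)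
    (by simp) x

theorem hasDerivAt_transProfile (hε : 0 < ε) (x : ℝ) :
    HasDerivAt (transProfile ε) (derivSoftSin ε (min x 0)) x :=
  hasDerivAt_comp_min_zero (hasDerivAt_softAbs_sin hε) (derivSoftSin_zero ε) x

theorem isProfilePair_longProfile_transProfile (hε : 0 < ε) (R : ℝ) :
    IsProfilePair R longProfile (transProfile ε) where
  contDiff_left := contDiff_one_of_hasDerivAt hasDerivAt_longProfile (by fun_prop)
  contDiff_right := contDiff_one_of_hasDerivAt (hasDerivAt_transProfile hε)
    ((continuous_derivSoftSin hε).comp (by fun_prop))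
  left_neg_one := by simp [longProfile]
  right_neg_one := by simp [transProfile, softAbs_zero hε.le]
  right_eq_zero x hx := by simp [transProfile, min_eq_right hx.1, softAbs_zero hε.le]

theorem integral_sin_mul_sq {c : ℝ} (hc : c ≠ 0) :
    ∫ x in (-1)..0, sin (c * x) ^ 2 = 1 / 2 - sin c * cos c / (2 * c) := by
  rw [intervalIntegral.integral_comp_mul_left (fun x => sin x ^ 2) hc, integral_sin_sq]
  simp only [mul_neg, mul_one, mul_zero, sin_neg, cos_neg, sin_zero, zero_mul, smul_eq_mul]
  field_simp
  ring

theorem integral_cos_pi_mul_sq : ∫ x in (-1)..0, cos (π * x) ^ 2 = 1 / 2 := by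
  rw [intervalIntegral.integral_comp_mul_left (fun x => cos x ^ 2) pi_ne_zero, integral_cos_sq]
  simp only [mul_neg, mul_one, mul_zero, sin_neg, cos_neg, sin_zero, sin_pi, smul_eq_mul]
  field_simp
  ring

theorem integral_cos_mul_neg_sin :
    ∫ x in (-1)..0, cos (π / 2 * x) * -sin (π * x) = 4 / (3 * π) := by
  have hprim : ∀ x, HasDerivAt (fun x => 4 / (3 * π) * cos (π / 2 * x) ^ 3)
      (cos (π / 2 * x) * -sin (π * x)) x := fun x => by
    refine (((hasDerivAt_cos_mul (π / 2) x).pow 3).const_mul _).congr_deriv ?_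
    rw [show π * x = 2 * (π / 2 * x) by ring, sin_two_mul]
    field_simp
    norm_num
    ring
  rw [intervalIntegral.integral_eq_sub_of_hasDerivAt (fun x _ => hprim x)
    (Continuous.intervalIntegrable (by fun_prop) _ _)]
  simp

theorem sq_sub_two_mul_le_softAbs_sq (hε : 0 ≤ ε) {s : ℝ} (hs : |s| ≤ 1) :
    s ^ 2 - 2 * ε ≤ softAbs ε s ^ 2 := by
  have hlow := abs_sub_le_softAbs ε s
  have hup := softAbs_le_abs hε s
  have hnonneg := softAbs_nonneg ε s
  rw [← sq_abs s]
  nlinarith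

theorem softAbs_sq_le (hε : 0 ≤ ε) (s : ℝ) : softAbs ε s ^ 2 ≤ s ^ 2 :=
  sq_le_sq.2 ((abs_of_nonneg (softAbs_nonneg ε s)).trans_le (softAbs_le_abs hε s))

variable {R : ℝ}

theorem integral_longProfile_sq_le (hR : 0 ≤ R) : ∫ x in (-1)..R, longProfile x ^ 2 ≤ 1 + R := by
  have hle : ∀ x, longProfile x ^ 2 ≤ 1 := fun x => cos_sq_le_one _
  have hcont : Continuous longProfile := by unfold longProfile; fun_prop
  refine (intervalIntegral.integral_mono (by linarith) ((hcont.pow 2).intervalIntegrable _ _)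
    intervalIntegrable_const hle).trans_eq ?_
  simp [add_comm]

theorem integral_deriv_longProfile_sq (hR : 0 ≤ R) :
    ∫ x in (-1)..R, deriv longProfile x ^ 2 = π ^ 2 / 8 := by
  simp only [fun x => (hasDerivAt_longProfile x).deriv]
  rw [integral_comp_min_zero (f := fun x => (-(π / 2 * sin (π / 2 * x))) ^ 2) hR (by fun_prop)
    (by simp)]
  simp only [neg_sq, mul_pow]
  rw [intervalIntegral.integral_const_mul, integral_sin_mul_sq (by positivity), cos_pi_div_two]
  ring

theorem integral_transProfile_sq (hε : 0 ≤ ε) (hR : 0 ≤ R) :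
    ∫ x in (-1)..R, transProfile ε x ^ 2 = ∫ x in (-1)..0, softAbs ε (sin (π * x)) ^ 2 := by
  have hcont := continuous_softAbs ε
  exact integral_comp_min_zero (f := fun x => softAbs ε (sin (π * x)) ^ 2) hR (by fun_prop)
    (by simp [softAbs_zero hε])

theorem integral_transProfile_sq_mem_Icc (hε : 0 ≤ ε) (hR : 0 ≤ R) :
    ∫ x in (-1)..R, transProfile ε x ^ 2 ∈ Icc (1 / 2 - 2 * ε) (1 / 2) := by
  have hcont := continuous_softAbs ε
  have hsin : ∫ x in (-1)..0, sin (π * x) ^ 2 = 1 / 2 := by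
    rw [integral_sin_mul_sq pi_ne_zero, sin_pi, zero_mul, zero_div, sub_zero]
  rw [integral_transProfile_sq hε hR, ← hsin]
  constructor
  · have hconst : ∫ _ in (-1 : ℝ)..0, 2 * ε = 2 * ε := by simp
    rw [← hconst, ← intervalIntegral.integral_sub
      (Continuous.intervalIntegrable (by fun_prop) _ _) intervalIntegrable_const]
    exact intervalIntegral.integral_mono (by norm_num)
      (Continuous.intervalIntegrable (by fun_prop) _ _)
      (Continuous.intervalIntegrable (by fun_prop) _ _)
      fun x => sq_sub_two_mul_le_softAbs_sq hε (abs_sin_le_one _)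
  · exact intervalIntegral.integral_mono (by norm_num)
      (Continuous.intervalIntegrable (by fun_prop) _ _)
      (Continuous.intervalIntegrable (by fun_prop) _ _) fun x => softAbs_sq_le hε _

theorem integral_deriv_transProfile_sq_le (hε : 0 < ε) (hR : 0 ≤ R) :
    ∫ x in (-1)..R, deriv (transProfile ε) x ^ 2 ≤ π ^ 2 / 2 := by
  have hcont := continuous_derivSoftSin hε
  simp only [fun x => (hasDerivAt_transProfile hε x).deriv]
  rw [integral_comp_min_zero (f := fun x => derivSoftSin ε x ^ 2) hR (by fun_prop)
    (by simp [derivSoftSin_zero])]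
  calc ∫ x in (-1)..0, derivSoftSin ε x ^ 2 ≤ ∫ x in (-1)..0, π ^ 2 * cos (π * x) ^ 2 := by
        refine intervalIntegral.integral_mono (by norm_num)
          (Continuous.intervalIntegrable (by fun_prop) _ _)
          (Continuous.intervalIntegrable (by fun_prop) _ _) fun x => ?_
        rw [derivSoftSin, mul_pow, mul_comm (cos _), mul_pow]
        exact mul_le_of_le_one_left (by positivity) (div_sqrt_sq_le_one ε _)
    _ = π ^ 2 / 2 := by
        rw [intervalIntegral.integral_const_mul, integral_cos_pi_mul_sq]
        ring

theorem integral_longProfile_mul_transProfile (hε : 0 ≤ ε) (hR : 0 ≤ R) :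
    ∫ x in (-1)..R, longProfile x * transProfile ε x =
      ∫ x in (-1)..0, cos (π / 2 * x) * softAbs ε (sin (π * x)) := by
  have hcont := continuous_softAbs ε
  exact integral_comp_min_zero (f := fun x => cos (π / 2 * x) * softAbs ε (sin (π * x))) hR
    (by fun_prop) (by simp [softAbs_zero hε])

theorem le_integral_longProfile_mul_transProfile (hε : 0 ≤ ε) (hR : 0 ≤ R) :
    4 / (3 * π) - ε ≤ ∫ x in (-1)..R, longProfile x * transProfile ε x := by
  have hcont := continuous_softAbs ε
  have hconst : ∫ _ in (-1 : ℝ)..0, ε = ε := by simp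
  rw [integral_longProfile_mul_transProfile hε hR, ← integral_cos_mul_neg_sin]
  nth_rw 1 [← hconst]
  rw [← intervalIntegral.integral_sub (Continuous.intervalIntegrable (by fun_prop) _ _)
    intervalIntegrable_const]
  refine intervalIntegral.integral_mono_on (by norm_num)
    (Continuous.intervalIntegrable (by fun_prop) _ _)
    (Continuous.intervalIntegrable (by fun_prop) _ _) fun x hx => ?_
  have hcos : 0 ≤ cos (π / 2 * x) :=
    cos_nonneg_of_mem_Icc ⟨by nlinarith [pi_pos, hx.1], by nlinarith [pi_pos, hx.2]⟩
  have hsoft := (sub_le_sub_right (neg_le_abs _) ε).trans (abs_sub_le_softAbs ε (sin (π * x)))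
  nlinarith [cos_le_one (π / 2 * x)]

theorem integral_deriv_longProfile_mul_deriv_transProfile (hε : 0 < ε) (hR : 0 ≤ R) :
    ∫ x in (-1)..R, deriv longProfile x * deriv (transProfile ε) x =
      π ^ 2 / 4 * ∫ x in (-1)..R, longProfile x * transProfile ε x := by
  have hcont := continuous_derivSoftSin hε
  set v : ℝ → ℝ := fun x => cos (π / 2 * x)
  set w : ℝ → ℝ := fun x => softAbs ε (sin (π * x))
  have hv : deriv v = fun x => -(π / 2 * sin (π / 2 * x)) :=
    funext fun x => (hasDerivAt_cos_mul _ x).deriv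
  have hw : deriv w = derivSoftSin ε := funext fun x => (hasDerivAt_softAbs_sin hε x).deriv
  have hv' : ∀ x, HasDerivAt (deriv v) (-(π ^ 2 / 4) * v x) x := fun x => by
    rw [hv]
    refine (((hasDerivAt_id x).const_mul (π / 2)).sin.const_mul (π / 2)).neg.congr_deriv ?_
    simp only [v, id, mul_one]
    ring
  have hreduce : ∫ x in (-1)..R, deriv longProfile x * deriv (transProfile ε) x =
      ∫ x in (-1)..0, deriv v x * deriv w x := by
    simp only [fun x => (hasDerivAt_longProfile x).deriv,
      fun x => (hasDerivAt_transProfile hε x).deriv, hv, hw]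
    exact integral_comp_min_zero
      (f := fun x => -(π / 2 * sin (π / 2 * x)) * derivSoftSin ε x) hR (by fun_prop) (by simp)
  rw [hreduce, integral_longProfile_mul_transProfile hε.le hR]
  exact integral_deriv_mul_deriv_eq (by fun_prop) hv'
    (contDiff_one_of_hasDerivAt (hasDerivAt_softAbs_sin hε) hcont)
    (by simp [w, softAbs_zero hε.le])

theorem pi_sq_div_eight_mul_add_le {A S S' P C : ℝ} (hS : S ≤ 1 / 2)
    (hS' : S' ≤ π ^ 2 / 2) (hA0 : 0 ≤ A) (hA : A ≤ C)
    (hSl : 1 / 2 - 2 * (1 / (200 * C)) ≤ S) (hC : 0 < C)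
    (hP : 83 / 200 ≤ P) :
    π ^ 2 / 8 * S + S' * A + 2 * (π ^ 2 / 4 * P * P) ≤ π ^ 2 * (A * S + P ^ 2) := by
  have hcap : A * (1 / 2 - S) ≤ 1 / 100 :=
    calc A * (1 / 2 - S) ≤ C * (2 * (1 / (200 * C))) :=
          mul_le_mul hA (by linarith) (by linarith) hC.le
      _ = 1 / 100 := by
          field_simp
          norm_num
  have hkey : S / 8 + A / 2 + P ^ 2 / 2 ≤ A * S + P ^ 2 := by nlinarith
  nlinarith [mul_le_mul_of_nonneg_left hkey (sq_nonneg π), mul_le_mul_of_nonneg_right hS' hA0]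

theorem exists_admR_integral_gradSq2_le_of_nonneg (hR : 0 ≤ R) :
    ∃ u, AdmR R u ∧ 0 < ∫ p in GamR R, u p ^ 2 ∧
      ∫ p in GamR R, gradSq2 u p ≤ π ^ 2 * ∫ p in GamR R, u p ^ 2 := by
  -- At `ε = 0` the inequality is `(4 / (3 * π)) ^ 2 ≥ 1 / 8`, which is strict; the smoothing costs
  -- `O((1 + R) * ε)`.
  obtain ⟨ε, hε⟩ : ∃ ε, ε = 1 / (200 * (1 + R)) := ⟨_, rfl⟩
  have hε0 : 0 < ε := hε ▸ by positivity
  have hε1 : ε ≤ 1 / 200 := by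
    rw [hε]
    exact one_div_le_one_div_of_le (by norm_num) (by linarith)
  have hpi : 21 / 50 ≤ 4 / (3 * π) := by
    rw [le_div_iff₀ (by positivity)]
    linarith [pi_lt_d2]
  have hpair := isProfilePair_longProfile_transProfile hε0 R
  have hS := integral_transProfile_sq_mem_Icc hε0.le hR
  have hP : 83 / 200 ≤ ∫ x in (-1)..R, longProfile x * transProfile ε x := by
    linarith [le_integral_longProfile_mul_transProfile hε0.le hR]
  have hA : 0 ≤ ∫ x in (-1)..R, longProfile x ^ 2 :=
    intervalIntegral.integral_nonneg (by linarith) fun x _ => sq_nonneg _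
  refine ⟨_, hpair.admR, ?_, ?_⟩
  · rw [hpair.integral_sq (by linarith)]
    have : 0 ≤ ∫ x in (-1)..R, transProfile ε x ^ 2 := by linarith [hS.1]
    positivity
  · rw [hpair.integral_gradSq2 (by linarith), hpair.integral_sq (by linarith),
      integral_deriv_longProfile_mul_deriv_transProfile hε0 hR,
      mul_left_comm (π ^ 2), integral_deriv_longProfile_sq hR]
    exact mul_le_mul_of_nonneg_left (pi_sq_div_eight_mul_add_le hS.2
      (integral_deriv_transProfile_sq_le hε0 hR) hA (integral_longProfile_sq_le hR) (hε ▸ hS.1)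
      (by linarith) hP) zero_le_two

theorem lamR_le_pi_sq (hR : 0 ≤ R) : lamR R ≤ π ^ 2 := by
  obtain ⟨u, hu, hpos, hle⟩ := exists_admR_integral_gradSq2_le_of_nonneg hR
  exact lamR_le hu hpos hle

end TestFunction

/-! ### The arms and monotonicity -/

section Arms

open Prod

variable {R R' : ℝ} {u : ℝ × ℝ → ℝ}

theorem pi_sq_mul_integral_upperArm_le_dxSq (hR : 0 ≤ R) (hRR' : R ≤ R') (hu : AdmR R' u) :
    π ^ 2 * ∫ p in upperArm R R', u p ^ 2 ≤ ∫ p in upperArm R R', dxSq u p := by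
  rw [setIntegral_upperArm, setIntegral_upperArm]
  refine mul_integral_sq_le_integral_dxSq (by norm_num) hRR' hu.1 fun y hy => ?_
  have hy0 : 0 ≤ y := hR.trans hy.1.le
  simpa using sq_mul_integral_sq_le_of_eq_zero neg_one_lt_zero (contDiff_slice hu.1 y)
    (hu.apply_neg_one_left (by linarith) hy.2) (hu.apply_zero_left hy0 hy.2)

theorem pi_sq_mul_integral_upperArm_le (hR : 0 ≤ R) (hRR' : R ≤ R') (hu : AdmR R' u) :
    π ^ 2 * ∫ p in upperArm R R', u p ^ 2 ≤ ∫ p in upperArm R R', gradSq2 u p :=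
  (pi_sq_mul_integral_upperArm_le_dxSq hR hRR' hu).trans <|
    setIntegral_mono (integrableOn_upperArm (continuous_dxSq hu.1) R R')
      (integrableOn_upperArm (continuous_gradSq2 hu.1) R R') (dxSq_le_gradSq2 u)

/-- The arms cannot lower the Rayleigh quotient, since their transverse ground energy `π²` is at
least `λ₁(Γ_R)`. -/
theorem monotoneOn_lamR : MonotoneOn lamR (Ici 0) := by
  intro R hR R' _ hRR'
  obtain ⟨v, hv, hpos, -⟩ := exists_admR_integral_gradSq2_le_of_nonneg (hR.trans hRR')
  refine le_lamR ⟨v, hv, hpos⟩ fun u hu => ?_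
  have harms : ∀ v, AdmR R' v →
      lamR R * ∫ p in upperArm R R', v p ^ 2 ≤ ∫ p in upperArm R R', gradSq2 v p := fun v hv =>
    (mul_le_mul_of_nonneg_right (lamR_le_pi_sq hR) (integral_nonneg fun p => sq_nonneg _)).trans
      (pi_sq_mul_integral_upperArm_le hR hRR' hv)
  have hcorner := lamR_mul_integral_sq_le (hu.mono hRR')
  have hupper := harms u hu
  have hright := harms _ hu.comp_swap
  rw [integral_GamR_eq_add hR hRR' (f := fun p => u p ^ 2) (hu.1.continuous.pow 2),
    integral_GamR_eq_add hR hRR' (continuous_gradSq2 hu.1)]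
  simp only [gradSq2_swap, mul_add]
  exact add_le_add hcorner (add_le_add hupper hright)

theorem integral_square_le_dxSq_add (hu : AdmR 1 u) :
    (π / 2 + 1 / 10) ^ 2 * ∫ p in GamR 0, u p ^ 2 ≤
      (∫ p in GamR 0, dxSq u p) + (∫ p in upperArm 0 1, dxSq u p.swap)
        + 2 * ∫ p in upperArm 0 1, u p.swap ^ 2 := by
  have hmass : Continuous fun p => u p ^ 2 := hu.1.continuous.pow 2
  have henergy := continuous_dxSq hu.1
  have harm : ∀ f : ℝ × ℝ → ℝ, Continuous f →
      ∫ p in upperArm 0 1, f p.swap = ∫ y in (-1)..0, ∫ x in 0..1, f (x, y) := fun f hf => by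
    rw [setIntegral_upperArm, ← integral_Ioo_prod_Ioo zero_le_one (by norm_num) hf,
      ← setIntegral_comp_swap f, preimage_swap_prod]
  have hint : ∀ {f : ℝ × ℝ → ℝ} (a b : ℝ), Continuous f →
      IntervalIntegrable (fun y => ∫ x in a..b, f (x, y)) volume (-1) 0 := fun a b hf =>
    (continuous_integral_fst hf a b).intervalIntegrable _ _
  rw [GamR_eq_of_nonpos le_rfl, harm _ henergy, harm _ hmass,
    integral_Ioo_prod_Ioo (by norm_num) (by norm_num) hmass,
    integral_Ioo_prod_Ioo (by norm_num) (by norm_num) henergy,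
    ← intervalIntegral.integral_const_mul, ← intervalIntegral.integral_const_mul,
    ← intervalIntegral.integral_add (hint _ _ henergy) (hint _ _ henergy),
    ← intervalIntegral.integral_add ((hint _ _ henergy).add (hint _ _ henergy))
      ((hint _ _ hmass).const_mul 2)]
  refine intervalIntegral.integral_mono_on_of_le_Ioo (by norm_num) ((hint _ _ hmass).const_mul _)
    (((hint _ _ henergy).add (hint _ _ henergy)).add ((hint _ _ hmass).const_mul 2))
    fun y hy => ?_
  simp only [dxSq_apply hu.1]
  exact sq_mul_integral_sq_le_add_of_left_eq_zero (contDiff_slice hu.1 y)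
    (hu.apply_neg_one_left hy.1.le (by linarith [hy.2]))

theorem mul_integral_GamR_one_le_dxSq (hu : AdmR 1 u) :
    (π / 2 + 1 / 10) ^ 2 * (∫ p in GamR 0, u p ^ 2) + π ^ 2 * (∫ p in upperArm 0 1, u p ^ 2)
      - 2 * (∫ p in upperArm 0 1, u p.swap ^ 2) ≤ ∫ p in GamR 1, dxSq u p := by
  rw [integral_GamR_eq_add le_rfl zero_le_one (continuous_dxSq hu.1)]
  linarith [integral_square_le_dxSq_add hu,
    pi_sq_mul_integral_upperArm_le_dxSq le_rfl zero_le_one hu]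

theorem pi_sq_div_two_lt_lamR_one : π ^ 2 / 2 < lamR 1 := by
  obtain ⟨v, hv, hpos, -⟩ := exists_admR_integral_gradSq2_le_of_nonneg zero_le_one
  refine (lt_add_of_pos_right _ one_half_pos).trans_le (le_lamR ⟨v, hv, hpos⟩ fun u hu => ?_)
  have hdx := mul_integral_GamR_one_le_dxSq hu
  have hdy := mul_integral_GamR_one_le_dxSq hu.comp_swap
  simp only [Function.comp_apply, swap_swap,
    integral_GamR_comp_swap (fun p => u p ^ 2) 0] at hdy
  rw [integral_gradSq2 hu,
    integral_GamR_eq_add le_rfl zero_le_one (f := fun p => u p ^ 2) (hu.1.continuous.pow 2)]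
  have hnonneg : ∀ (f : ℝ × ℝ → ℝ) (s : Set (ℝ × ℝ)), 0 ≤ ∫ p in s, f p ^ 2 := fun f s =>
    integral_nonneg fun p => sq_nonneg _
  have hcorner := mul_le_mul_of_nonneg_right
    (by nlinarith [pi_gt_three] : π ^ 2 / 2 + 1 / 2 ≤ 2 * (π / 2 + 1 / 10) ^ 2)
    (hnonneg u (GamR 0))
  have harms := mul_le_mul_of_nonneg_right
    (by nlinarith [pi_gt_three] : π ^ 2 / 2 + 1 / 2 ≤ π ^ 2 - 2)
    (add_nonneg (hnonneg u (upperArm 0 1)) (hnonneg (u ∘ swap) (upperArm 0 1)))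
  simp only [Function.comp_apply] at harms
  linarith

theorem isPotentialWell_lamR : IsPotentialWell lamR (-1) 0 where
  lt := neg_one_lt_zero
  strictAntiOn s hs t ht hst := by
    have : 0 < 1 + s := by linarith [hs.1]
    rw [lamR_eq_of_nonpos hs.1 hs.2, lamR_eq_of_nonpos ht.1 ht.2]
    gcongr
  continuousOn := by
    refine ContinuousOn.congr (f := fun t => π ^ 2 / (2 * (1 + t) ^ 2)) ?_ fun t ht =>
      lamR_eq_of_nonpos ht.1 ht.2
    refine continuousOn_const.div (by fun_prop) fun t ht => ?_
    have : 0 < 1 + t := by linarith [ht.1]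
    positivity
  tendsto_atTop := by
    have hden : Filter.Tendsto (fun t : ℝ => 2 * (1 + t) ^ 2) (nhdsWithin (-1) (Ioi (-1)))
        (nhdsWithin 0 (Ioi 0)) := by
      refine tendsto_nhdsWithin_iff.2 ⟨?_, ?_⟩
      · exact ((by fun_prop : Continuous fun t : ℝ => 2 * (1 + t) ^ 2).tendsto' _ _
          (by norm_num)).mono_left nhdsWithin_le_nhds
      · filter_upwards [self_mem_nhdsWithin] with t ht
        have : 0 < 1 + t := by linarith [mem_Ioi.1 ht]
        exact mem_Ioi.2 (by positivity)
    refine Filter.Tendsto.congr' ?_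
      (hden.inv_tendsto_nhdsGT_zero.const_mul_atTop (by positivity : 0 < π ^ 2))
    filter_upwards [Ioc_mem_nhdsGT neg_one_lt_zero] with t ht
    exact (div_eq_mul_inv _ _).symm.trans (lamR_eq_of_nonpos ht.1 ht.2).symm
  monotoneOn := monotoneOn_lamR
  bddAbove := ⟨π ^ 2, forall_mem_image.2 fun _ ht => lamR_le_pi_sq ht⟩
  exists_gt := ⟨1, mem_Ici.2 zero_le_one, by
    simpa [lamR_eq_of_nonpos neg_one_lt_zero le_rfl] using pi_sq_div_two_lt_lamR_one⟩

end Arms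

/-! ### The minimizer -/

/-- Proposition 3.8: there is a unique `L* ∈ (−1,∞)` minimizing the
Sturm–Liouville ground energy `μ`; moreover `L* ∈ (−1,0)` and `μ(L*) = λ(L*)` where
`λ(t) = λ₁(Γ_t)`. -/
theorem muSL_unique_minimizer :
    ∃ Lstar : ℝ, Lstar ∈ Set.Ioo (-1 : ℝ) 0 ∧
      muSL Lstar = sInf {m | ∃ L : ℝ, -1 < L ∧ m = muSL L} ∧
      muSL Lstar = lamR Lstar ∧
      ∀ L : ℝ, -1 < L → muSL L = sInf {m | ∃ L' : ℝ, -1 < L' ∧ m = muSL L'} →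
        L = Lstar := by
  rw [muSL_eq_groundEnergy]
  obtain ⟨a, ha, hcross, hlt⟩ := isPotentialWell_lamR.exists_forall_ne_groundEnergy_lt
  have hinf : sInf {m | ∃ L : ℝ, -1 < L ∧ m = groundEnergy lamR L} = groundEnergy lamR a := by
    refine IsLeast.csInf_eq ⟨⟨a, ha.1, rfl⟩, ?_⟩
    rintro m ⟨L, hL, rfl⟩
    rcases eq_or_ne L a with rfl | hne
    · exact le_rfl
    · exact (hlt L hL hne).le
  refine ⟨a, ha, hinf.symm, hcross, fun L hL h => ?_⟩
  by_contra hne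
  exact (hlt L hL hne).ne' (h.trans hinf)
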